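/- For all x ∈ [0,1], (1/(4π⁴))·∫₀^π∫₀^π∫₀^π∫₀^π (1 − (x/4)(cos φ₁ + cos φ₂ + cos φ₃ + cos φ₄))^{-1} dφ₁ dφ₂ dφ₃ dφ₄ = (4/π²)·∫₀^∞ [I₀(xt)]² I₀(t) [K₀(t)]³ t dt. -/

import Mathlib

open Real MeasureTheory Set

/-- Modified Bessel function `I₀(t) = (1/π)∫₀^π exp(t cos θ) dθ`. -/
noncomputable def I0 (t : ℝ) : ℝ := (1 / π) * ∫ θ in (0:ℝ)..π, exp (t * cos θ)

/-- Modified Bessel function `K₀(t) = ∫₀^∞ exp(−t cosh u) du`. -/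
noncomputable def K0 (t : ℝ) : ℝ := ∫ u in Ioi (0:ℝ), exp (-(t * Real.cosh u))

/-- Rising factorial `(a)ₙ = a(a+1)⋯(a+n−1)`. -/
noncomputable def ris (a : ℝ) (n : ℕ) : ℝ := ∏ k ∈ Finset.range n, (a + k)

/-- Generalized hypergeometric series `ₚF_q(a; b | x)`. -/
noncomputable def pFq (a b : List ℝ) (x : ℝ) : ℝ :=
  ∑' n : ℕ, ((a.map fun p => ris p n).prod / (b.map fun q => ris q n).prod) * x ^ n
    / (n.factorial : ℝ)

open Filter Topology


noncomputable def I1 (t : ℝ) : ℝ := (1 / π) * ∫ θ in (0:ℝ)..π, cos θ * exp (t * cos θ)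

lemma aux_deriv (g : ℝ → ℝ) (hg : Continuous g) (t : ℝ) :
    HasDerivAt (fun t => ∫ θ in (0:ℝ)..π, g θ * exp (t * cos θ))
      (∫ θ in (0:ℝ)..π, g θ * (cos θ * exp (t * cos θ))) t := by
  refine (intervalIntegral.hasDerivAt_integral_of_dominated_loc_of_deriv_le
    (μ := volume) (s := Metric.ball t 1) (bound := fun θ => |g θ| * exp (|t| + 1))
    (F' := fun t θ => g θ * (cos θ * exp (t * cos θ)))
    (Metric.ball_mem_nhds t one_pos) ?_ ?_ ?_ ?_ ?_ ?_).2
  · exact Eventually.of_forall fun x => (by fun_prop : Continuous _).aestronglyMeasurable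
  · exact (by fun_prop : Continuous _).intervalIntegrable _ _
  · exact (by fun_prop : Continuous _).aestronglyMeasurable
  · refine Eventually.of_forall fun θ _ x hx => ?_
    rw [norm_mul, norm_eq_abs, norm_mul]
    gcongr
    have h1 : |cos θ| ≤ 1 := abs_cos_le_one θ
    have h2 : |x| ≤ |t| + 1 := by
      have : |x - t| < 1 := by simpa [Real.dist_eq] using hx
      have := abs_sub_abs_le_abs_sub x t
      linarith
    have h3 : x * cos θ ≤ |t| + 1 := by
      calc x * cos θ ≤ |x * cos θ| := le_abs_self _
        _ = |x| * |cos θ| := abs_mul _ _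
        _ ≤ |x| * 1 := by gcongr
        _ ≤ _ := by linarith
    calc ‖cos θ‖ * ‖exp (x * cos θ)‖ ≤ 1 * exp (|t| + 1) := by
          rw [norm_eq_abs, norm_eq_abs, abs_exp]; gcongr
      _ = _ := one_mul _
  · exact (by fun_prop : Continuous _).intervalIntegrable _ _
  · refine Eventually.of_forall fun θ _ x hx => ?_
    have : HasDerivAt (fun x => x * cos θ) (cos θ) x := by
      simpa using (hasDerivAt_id x).mul_const (cos θ)
    exact ((this.exp).const_mul (g θ)).congr_deriv (by ring)

lemma I0_hasDerivAt (t : ℝ) : HasDerivAt I0 (I1 t) t := by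
  have := (aux_deriv (fun _ => 1) continuous_const t).const_mul (1 / π)
  simp only [one_mul] at this
  exact this

lemma I1_eq (t : ℝ) : I1 t = t * ((1 / π) * ∫ θ in (0:ℝ)..π, sin θ ^ 2 * exp (t * cos θ)) := by
  have h := intervalIntegral.integral_eq_sub_of_hasDerivAt (a := 0) (b := π)
    (f := fun θ => sin θ * exp (t * cos θ))
    (f' := fun θ => cos θ * exp (t * cos θ) - t * (sin θ ^ 2 * exp (t * cos θ))) ?_
    ((by fun_prop : Continuous _).intervalIntegrable _ _)
  · rw [intervalIntegral.integral_sub ((by fun_prop : Continuous _).intervalIntegrable _ _)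
      ((by fun_prop : Continuous _).intervalIntegrable _ _), intervalIntegral.integral_const_mul] at h
    simp only [sin_pi, sin_zero, zero_mul, sub_zero] at h
    unfold I1
    rw [sub_eq_zero.1 h]; ring
  · intro θ _
    exact ((hasDerivAt_sin θ).mul (((hasDerivAt_cos θ).const_mul t).exp)).congr_deriv (by ring)

lemma tI1_hasDerivAt (t : ℝ) : HasDerivAt (fun t => t * I1 t) (t * I0 t) t := by
  have h1 : HasDerivAt I1 ((1/π) * ∫ θ in (0:ℝ)..π, cos θ * (cos θ * exp (t * cos θ))) t :=
    (aux_deriv cos continuous_cos t).const_mul (1/π)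
  refine ((hasDerivAt_id t).mul h1).congr_deriv ?_
  rw [I1_eq]
  have : ∫ θ in (0:ℝ)..π, exp (t * cos θ) = (∫ θ in (0:ℝ)..π, sin θ ^ 2 * exp (t * cos θ)) +
      ∫ θ in (0:ℝ)..π, cos θ * (cos θ * exp (t * cos θ)) := by
    rw [← intervalIntegral.integral_add ((by fun_prop : Continuous _).intervalIntegrable _ _)
      ((by fun_prop : Continuous _).intervalIntegrable _ _)]
    congr 1; ext θ
    have := sin_sq_add_cos_sq θ
    linear_combination (-exp (t * cos θ)) * this
  unfold I0
  rw [this]; simp; ring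

lemma I0_continuous : Continuous I0 :=
  continuous_iff_continuousAt.2 fun t => (I0_hasDerivAt t).continuousAt

lemma I1_continuous : Continuous I1 :=
  continuous_iff_continuousAt.2 fun t =>
    ((aux_deriv cos continuous_cos t).const_mul (1/π)).continuousAt

lemma I0_nonneg (t : ℝ) : 0 ≤ I0 t := by
  unfold I0
  have : 0 ≤ ∫ θ in (0:ℝ)..π, exp (t * cos θ) :=
    intervalIntegral.integral_nonneg pi_pos.le fun _ _ => (exp_pos _).le
  positivity

lemma I0_pos (t : ℝ) : 0 < I0 t := by
  unfold I0
  have : 0 < ∫ θ in (0:ℝ)..π, exp (t * cos θ) :=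
    intervalIntegral.intervalIntegral_pos_of_pos
      ((by fun_prop : Continuous _).intervalIntegrable _ _) (fun _ => exp_pos _) pi_pos
  have := pi_pos
  positivity

lemma I0_le (t : ℝ) (ht : 0 ≤ t) : I0 t ≤ exp t := by
  unfold I0
  have : ∫ θ in (0:ℝ)..π, exp (t * cos θ) ≤ ∫ θ in (0:ℝ)..π, exp t := by
    apply intervalIntegral.integral_mono_on pi_pos.le
      ((by fun_prop : Continuous _).intervalIntegrable _ _)
      ((by fun_prop : Continuous _).intervalIntegrable _ _)
    intro θ _
    gcongr
    nlinarith [cos_le_one θ]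
  simp only [intervalIntegral.integral_const, sub_zero, smul_eq_mul] at this
  rw [one_div, inv_mul_le_iff₀ pi_pos]; exact this

lemma I1_nonneg (t : ℝ) (ht : 0 ≤ t) : 0 ≤ I1 t := by
  rw [I1_eq]
  have : 0 ≤ ∫ θ in (0:ℝ)..π, sin θ ^ 2 * exp (t * cos θ) :=
    intervalIntegral.integral_nonneg pi_pos.le fun _ _ => by positivity
  positivity

lemma I1_le (t : ℝ) (ht : 0 ≤ t) : I1 t ≤ t * exp t := by
  rw [I1_eq]
  refine le_trans (mul_le_mul_of_nonneg_left ?_ ht) (mul_le_mul_of_nonneg_left (I0_le t ht) ht)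
  unfold I0
  gcongr
  apply intervalIntegral.integral_mono_on pi_pos.le
      ((by fun_prop : Continuous _).intervalIntegrable _ _)
      ((by fun_prop : Continuous _).intervalIntegrable _ _)
  intro θ _
  have : sin θ ^ 2 ≤ 1 := sin_sq_le_one θ
  nlinarith [exp_pos (t * cos θ)]

noncomputable def Wc (n : ℕ) : ℝ := (1/π) * ∫ θ in (0:ℝ)..π, cos θ ^ n

lemma Wc_zero : Wc 0 = 1 := by simp [Wc, pi_ne_zero]
lemma Wc_one : Wc 1 = 0 := by simp [Wc]
lemma Wc_succ (n : ℕ) : Wc (n+2) = (n+1)/(n+2) * Wc n := by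
  unfold Wc; rw [integral_cos_pow]; simp; ring

lemma Wc_odd (n : ℕ) : Wc (2*n+1) = 0 := by
  induction n with
  | zero => exact Wc_one
  | succ n ih => rw [show 2*(n+1)+1 = (2*n+1)+2 by ring, Wc_succ, ih, mul_zero]

lemma Wc_even (n : ℕ) : Wc (2*n) / (2*n).factorial = 1 / (4^n * (n.factorial:ℝ)^2) := by
  induction n with
  | zero => simp [Wc_zero]
  | succ n ih =>
    have h : Wc (2*n) = (2*n).factorial / (4^n * (n.factorial:ℝ)^2) := by
      have := Nat.factorial_ne_zero (2*n)
      field_simp at ih ⊢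
      exact ih
    rw [show 2*(n+1) = 2*n+2 by ring, Wc_succ, h, Nat.factorial_succ, Nat.factorial_succ,
      Nat.factorial_succ]
    have := Nat.factorial_ne_zero (2*n)
    have := Nat.factorial_ne_zero n
    push_cast
    field_simp
    ring

lemma I0_hasSum (t : ℝ) : HasSum (fun n : ℕ => 1 / (4^n * (n.factorial:ℝ)^2) * t^(2*n)) (I0 t) := by
  have h : HasSum (fun n : ℕ => ∫ θ in (0:ℝ)..π, (t * cos θ)^n / n.factorial)
      (∫ θ in (0:ℝ)..π, exp (t * cos θ)) := by
    apply intervalIntegral.hasSum_integral_of_dominated_convergence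
      (bound := fun n _ => |t|^n / n.factorial)
    · intro n; exact (by fun_prop : Continuous _).aestronglyMeasurable
    · intro n; refine Eventually.of_forall fun θ _ => ?_
      rw [norm_div, norm_pow, norm_mul, norm_eq_abs, norm_eq_abs]
      simp only [RCLike.norm_natCast]
      gcongr
      have := abs_cos_le_one θ
      nlinarith [abs_nonneg t]
    · exact Eventually.of_forall fun θ _ => Real.summable_pow_div_factorial _
    · exact intervalIntegrable_const
    · refine Eventually.of_forall fun θ _ => ?_
      rw [Real.exp_eq_exp_ℝ]
      exact NormedSpace.expSeries_div_hasSum_exp (t * cos θ)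
  have h2 : HasSum (fun n : ℕ => Wc n / n.factorial * t^n) (I0 t) := by
    have e : (fun n : ℕ => Wc n / n.factorial * t^n) =
        fun n : ℕ => (1/π) * ∫ θ in (0:ℝ)..π, (t * cos θ)^n / n.factorial := ?_
    · rw [e]; exact h.mul_left (1/π)
    funext n
    simp_rw [mul_pow, mul_div_assoc]
    rw [intervalIntegral.integral_const_mul, intervalIntegral.integral_div]
    unfold Wc; ring
  have hi : Function.Injective (fun n : ℕ => 2*n) := fun a b h => by simpa using h
  rw [← hi.hasSum_iff] at h2
  · convert h2 using 1
    ext n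
    simp only [Function.comp, Wc_even]
  · intro n hn
    rcases Nat.even_or_odd' n with ⟨k, rfl | rfl⟩
    · exact absurd ⟨k, rfl⟩ hn
    · rw [Wc_odd]; simp


noncomputable def KK (j : ℕ) (t : ℝ) : ℝ := ∫ u in Ioi (0:ℝ), Real.cosh u ^ j * exp (-(t * Real.cosh u))

lemma KK_zero (t : ℝ) : KK 0 t = K0 t := by simp [KK, K0]

lemma cosh_eq_sinh_half (u : ℝ) : Real.cosh u = 1 + 2 * Real.sinh (u/2)^2 := by
  have := Real.cosh_two_mul (u/2)
  rw [show 2 * (u/2) = u by ring] at this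
  rw [this, Real.cosh_sq]; ring

lemma le_cosh' (u : ℝ) : 1 + u^2/2 ≤ Real.cosh u := by
  rw [cosh_eq_sinh_half]
  have h : |u/2| ≤ |Real.sinh (u/2)| := by
    rw [Real.abs_sinh]
    exact Real.self_le_sinh_iff.2 (abs_nonneg _)
  have := sq_le_sq.2 h
  nlinarith

lemma exp_cosh_le (t : ℝ) (ht : 0 ≤ t) (u : ℝ) :
    exp (-(t * Real.cosh u)) ≤ exp (-t) * exp (-(t/2) * u^2) := by
  rw [← exp_add]; gcongr
  nlinarith [le_cosh' u]

lemma KK_integrable (j : ℕ) (t : ℝ) (ht : 0 < t) :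
    IntegrableOn (fun u => Real.cosh u ^ j * exp (-(t * Real.cosh u))) (Ioi 0) := by
  have hg : Integrable (fun u : ℝ => (j.factorial / (t/2)^j) * (exp (-(t/2)) * exp (-(t/2/2) * u^2))) :=
    ((integrable_exp_neg_mul_sq (by positivity)).const_mul _).const_mul _
  refine hg.integrableOn.mono' ?_ ?_
  · exact (Continuous.aestronglyMeasurable (by fun_prop))
  · refine Eventually.of_forall fun u => ?_
    have hc : 0 < Real.cosh u := Real.cosh_pos u
    rw [norm_of_nonneg (by positivity)]
    have h1 := Real.pow_div_factorial_le_exp (x := t/2 * Real.cosh u) (by positivity) j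
    have h2 := exp_cosh_le (t/2) (by positivity) u
    have h3 : Real.cosh u ^ j ≤ (j.factorial / (t/2)^j) * exp (t/2 * Real.cosh u) := by
      rw [mul_pow] at h1
      have : (0:ℝ) < j.factorial := by positivity
      rw [div_le_iff₀ this] at h1
      rw [div_mul_eq_mul_div, le_div_iff₀ (by positivity)]
      linarith
    calc _ ≤ ((j.factorial / (t/2)^j) * exp (t/2 * Real.cosh u)) * exp (-(t * Real.cosh u)) := by gcongr
      _ = (j.factorial / (t/2)^j) * exp (-(t/2 * Real.cosh u)) := by
        rw [mul_assoc, ← exp_add]; congr 2; ring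
      _ ≤ _ := by gcongr

lemma KK_hasDerivAt (j : ℕ) (t : ℝ) (ht : 0 < t) : HasDerivAt (KK j) (-KK (j+1) t) t := by
  have h := (hasDerivAt_integral_of_dominated_loc_of_deriv_le (μ := volume.restrict (Ioi (0:ℝ)))
    (F := fun t u => Real.cosh u ^ j * exp (-(t * Real.cosh u)))
    (F' := fun t u => -(Real.cosh u ^ (j+1) * exp (-(t * Real.cosh u))))
    (bound := fun u => Real.cosh u ^ (j+1) * exp (-(t/2 * Real.cosh u)))
    (x₀ := t) (s := Ioi (t/2)) (Ioi_mem_nhds (by linarith)) ?_ (KK_integrable j t ht) ?_ ?_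
    (KK_integrable (j+1) (t/2) (by linarith)) ?_).2
  · rw [integral_neg] at h
    exact h
  · exact Eventually.of_forall fun x => Continuous.aestronglyMeasurable (by fun_prop)
  · exact Continuous.aestronglyMeasurable (by fun_prop)
  · refine Eventually.of_forall fun u x hx => ?_
    have hc : 0 < Real.cosh u := Real.cosh_pos u
    rw [norm_neg, norm_of_nonneg (by positivity)]
    have : t/2 ≤ x := (mem_Ioi.1 hx).le
    gcongr
  · refine Eventually.of_forall fun u x hx => ?_
    have h0 : HasDerivAt (fun x => -(x * Real.cosh u)) (-Real.cosh u) x :=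
      (((hasDerivAt_id x).mul_const (Real.cosh u)).neg).congr_deriv (by simp)
    exact (h0.exp.const_mul _).congr_deriv (by ring)

lemma KK_rec (t : ℝ) (ht : 0 < t) : KK 1 t = t * (KK 2 t - KK 0 t) := by
  have hd : ∀ u ∈ Ici (0:ℝ), HasDerivAt (fun u => Real.sinh u * exp (-(t * Real.cosh u)))
      (Real.cosh u ^ 1 * exp (-(t * Real.cosh u)) - t * (Real.cosh u ^ 2 * exp (-(t * Real.cosh u))
        - Real.cosh u ^ 0 * exp (-(t * Real.cosh u)))) u := by
    intro u _
    refine ((Real.hasDerivAt_sinh u).mul ((Real.hasDerivAt_cosh u).const_mul t).neg.exp).congr_deriv ?_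
    have := Real.cosh_sq u
    simp only [Pi.neg_apply]
    rw [this]; ring
  have hi := ((KK_integrable 1 t ht).sub
    (((KK_integrable 2 t ht).sub (KK_integrable 0 t ht)).const_mul t))
  have ht0 : Tendsto (fun u => Real.sinh u * exp (-(t * Real.cosh u))) atTop (𝓝 0) := by
    have hb : Tendsto (fun u : ℝ => (2/t) * (exp (-(t/2) * u))) atTop (𝓝 0) := by
      rw [← mul_zero (2/t)]
      refine Tendsto.const_mul _ (tendsto_exp_atBot.comp ?_)
      exact tendsto_id.const_mul_atTop_of_neg (by linarith)
    refine squeeze_zero' ?_ ?_ hb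
    · filter_upwards [eventually_ge_atTop 0] with u hu
      have := Real.sinh_nonneg_iff.2 hu
      positivity
    · filter_upwards [eventually_ge_atTop 0] with u hu
      have h1 : Real.sinh u ≤ Real.cosh u := (Real.sinh_lt_cosh u).le
      have h2 : u ≤ Real.cosh u := by nlinarith [le_cosh' u, sq_nonneg (u-1)]
      have h3 : Real.cosh u ≤ (2/t) * exp (t/2 * Real.cosh u) := by
        rw [div_mul_eq_mul_div, le_div_iff₀ ht]
        linarith [add_one_le_exp (t/2 * Real.cosh u)]
      calc _ ≤ ((2/t) * exp (t/2 * Real.cosh u)) * exp (-(t * Real.cosh u)) := by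
            gcongr; exact h1.trans h3
        _ = (2/t) * exp (-(t/2) * Real.cosh u) := by
            rw [mul_assoc, ← exp_add]; congr 2; ring
        _ ≤ _ := by
            have : -(t/2) * Real.cosh u ≤ -(t/2) * u := by nlinarith
            gcongr
  have h := integral_Ioi_of_hasDerivAt_of_tendsto' hd hi ht0
  have hi2 : IntegrableOn (fun u => t * (Real.cosh u ^ 2 * exp (-(t * Real.cosh u))
        - Real.cosh u ^ 0 * exp (-(t * Real.cosh u)))) (Ioi 0) :=
    (((KK_integrable 2 t ht).sub (KK_integrable 0 t ht)).const_mul t)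
  rw [integral_sub (KK_integrable 1 t ht) hi2, integral_const_mul,
    integral_sub (KK_integrable 2 t ht) (KK_integrable 0 t ht)] at h
  simp only [Real.sinh_zero, zero_mul, sub_zero] at h
  exact sub_eq_zero.1 h

lemma K0_hasDerivAt (t : ℝ) (ht : 0 < t) : HasDerivAt K0 (-KK 1 t) t := by
  have : K0 = KK 0 := by ext t; rw [KK_zero]
  rw [this]; exact KK_hasDerivAt 0 t ht

lemma tK1_hasDerivAt (t : ℝ) (ht : 0 < t) : HasDerivAt (fun t => t * KK 1 t) (-(t * K0 t)) t := by
  refine ((hasDerivAt_id t).mul (KK_hasDerivAt 1 t ht)).congr_deriv ?_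
  have := KK_rec t ht
  simp only [id]
  rw [← KK_zero]; linarith

lemma KK_nonneg (j : ℕ) (t : ℝ) : 0 ≤ KK j t := by
  apply integral_nonneg
  intro u
  have hc : 0 < Real.cosh u := Real.cosh_pos u
  positivity

lemma K0_nonneg (t : ℝ) : 0 ≤ K0 t := KK_zero t ▸ KK_nonneg 0 t

lemma K0_le (t : ℝ) (ht : 0 < t) : K0 t ≤ 2 * exp (-t) / √t := by
  have h1 : K0 t ≤ ∫ u in Ioi (0:ℝ), exp (-t) * exp (-(t/2) * u^2) := by
    apply setIntegral_mono
    · simpa using KK_integrable 0 t ht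
    · exact ((integrable_exp_neg_mul_sq (by positivity)).const_mul _).integrableOn
    · intro u; exact exp_cosh_le t ht.le u
  rw [integral_const_mul, integral_gaussian_Ioi] at h1
  refine h1.trans ?_
  rw [mul_comm 2, mul_div_assoc]
  refine mul_le_mul_of_nonneg_left ?_ (exp_pos _).le
  rw [show π / (t/2) = (2*π) / t by field_simp, sqrt_div (by positivity)]
  rw [div_right_comm]
  gcongr
  rw [div_le_iff₀ (by norm_num)]
  apply sqrt_le_iff.2
  constructor
  · norm_num
  · nlinarith [pi_le_four]

lemma tK1_le (t : ℝ) (ht : 0 < t) : t * KK 1 t ≤ 6 * exp (-t/2) / √t := by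
  have h1 : t * KK 1 t ≤ 2 * K0 (t/2) := by
    unfold KK K0
    rw [← integral_const_mul, ← integral_const_mul]
    apply setIntegral_mono
    · exact (KK_integrable 1 t ht).const_mul t
    · have := (KK_integrable 0 (t/2) (by positivity)).const_mul 2
      simp only [pow_zero, one_mul] at this
      exact this
    · intro u
      dsimp only
      have := add_one_le_exp (t/2 * Real.cosh u)
      have e : exp (-(t/2 * Real.cosh u)) = exp (t/2 * Real.cosh u) * exp (-(t * Real.cosh u)) := by
        rw [← exp_add]; congr 1; ring
      rw [e]
      nlinarith [exp_pos (-(t * Real.cosh u)), Real.cosh_pos u]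
  refine h1.trans ?_
  have h2 := K0_le (t/2) (by positivity)
  rw [sqrt_div ht.le] at h2
  have : √2 ≤ 3/2 := by
    apply sqrt_le_iff.2; norm_num
  have hs : 0 < √t := sqrt_pos.2 ht
  have e : -(t/2) = -t/2 := by ring
  rw [e] at h2
  calc 2 * K0 (t/2) ≤ 2 * (2 * exp (-t/2) / (√t/√2)) := by gcongr
    _ = (4 * √2) * exp (-t/2) / √t := by field_simp; ring
    _ ≤ _ := by gcongr; linarith


lemma slope_lim (f : ℝ → ℝ) (hf : HasDerivAt f 1 0) (h0 : f 0 = 0) (v : ℝ) :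
    Tendsto (fun s : ℝ => s * f (s⁻¹ * v / 2)) atTop (𝓝 (v/2)) := by
  have h1 : HasDerivAt (fun h : ℝ => f (h * (v/2))) (v/2) 0 := by
    have h2 : HasDerivAt (fun h : ℝ => h * (v/2)) (v/2) 0 :=
      ((hasDerivAt_id (0:ℝ)).mul_const (v/2)).congr_deriv (by simp)
    have h3 : HasDerivAt f 1 ((fun h : ℝ => h * (v/2)) 0) := by simpa using hf
    exact (h3.comp (0:ℝ) h2).congr_deriv (by simp)
  have h4 := hasDerivAt_iff_tendsto_slope_zero.1 h1
  have h5 : Tendsto (fun s : ℝ => s⁻¹) atTop (𝓝[≠] 0) := by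
    refine tendsto_nhdsWithin_iff.2 ⟨tendsto_inv_atTop_zero, ?_⟩
    filter_upwards [eventually_gt_atTop 0] with s hs
    simp [hs.ne']
  refine (h4.comp h5).congr fun s => ?_
  simp [h0, mul_div_assoc]

lemma K0_scale (s : ℝ) (hs : 0 < s) : s * exp (s^2) * K0 (s^2) =
    ∫ v in Ioi (0:ℝ), exp (-(2 * (s * Real.sinh (s⁻¹ * v / 2))^2)) := by
  have h := integral_comp_mul_left_Ioi (fun u => exp (-(2 * (s * Real.sinh (u / 2))^2))) 0
    (inv_pos.2 hs)
  rw [h]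
  simp only [mul_zero, inv_inv, smul_eq_mul]
  rw [mul_assoc]
  congr 1
  unfold K0
  rw [← integral_const_mul]
  congr 1; ext u
  rw [← exp_add, cosh_eq_sinh_half]; congr 1; ring

lemma K0_asymp' : Tendsto (fun s => s * exp (s^2) * K0 (s^2)) atTop (𝓝 (√(π/2))) := by
  have hl : ∫ v in Ioi (0:ℝ), exp (-(2 * (v/2)^2)) = √(π/2) := by
    have := integral_gaussian_Ioi (1/2)
    have e : √(π / (1/2)) / 2 = √(π/2) := by
      rw [show π / (1/2) = 2^2 * (π/2) by ring, sqrt_mul (by norm_num), sqrt_sq (by norm_num)]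
      ring
    rw [← e, ← this]
    congr 1; ext v; congr 1; ring
  rw [← hl]
  have hc : ∀ᶠ s : ℝ in atTop, ∫ v in Ioi (0:ℝ), exp (-(2 * (s * Real.sinh (s⁻¹ * v / 2))^2))
      = s * exp (s^2) * K0 (s^2) := by
    filter_upwards [eventually_gt_atTop 0] with s hs using (K0_scale s hs).symm
  refine Tendsto.congr' hc ?_
  refine tendsto_integral_filter_of_dominated_convergence (fun v => exp (-(1/2) * v^2)) ?_ ?_ ?_ ?_
  · exact Eventually.of_forall fun s => Continuous.aestronglyMeasurable (by fun_prop)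
  · filter_upwards [eventually_gt_atTop 0] with s hs
    refine Eventually.of_forall fun v => ?_
    rw [norm_of_nonneg (exp_pos _).le]
    gcongr
    have h : |s⁻¹ * v/2| ≤ |Real.sinh (s⁻¹ * v/2)| := by
      rw [Real.abs_sinh]
      exact Real.self_le_sinh_iff.2 (abs_nonneg _)
    have := sq_le_sq.2 h
    have e : v = s * (s⁻¹ * v) := by field_simp
    have e2 : v^2 = s^2 * (s⁻¹ * v)^2 := by rw [← mul_pow, ← e]
    rw [e2]
    nlinarith [sq_nonneg s]
  · exact (integrable_exp_neg_mul_sq (by norm_num)).integrableOn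
  · refine Eventually.of_forall fun v => ?_
    have := slope_lim Real.sinh (by simpa using Real.hasDerivAt_sinh 0) Real.sinh_zero v
    exact ((this.pow 2).const_mul 2).neg.rexp

lemma K0_asymp : Tendsto (fun t => √t * exp t * K0 t) atTop (𝓝 (√(π/2))) := by
  refine (K0_asymp'.comp tendsto_sqrt_atTop).congr' ?_
  filter_upwards [eventually_ge_atTop 0] with t ht
  simp [sq_sqrt ht]

lemma cos_eq_sin_half (u : ℝ) : cos u = 1 - 2 * sin (u/2)^2 := by
  have := cos_two_mul (u/2)
  rw [show 2 * (u/2) = u by ring] at this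
  rw [this, cos_sq']; ring

lemma I0_scale (s : ℝ) (hs : 0 < s) : s * exp (-s^2) * I0 (s^2) =
    (1/π) * ∫ v in Ioi (0:ℝ), (Iic π).indicator (fun u => exp (-(2 * (s * sin (u / 2))^2))) (s⁻¹ * v) := by
  have h := integral_comp_mul_left_Ioi
    ((Iic π).indicator (fun u => exp (-(2 * (s * sin (u / 2))^2)))) 0 (inv_pos.2 hs)
  rw [h]
  simp only [mul_zero, inv_inv, smul_eq_mul]
  unfold I0
  rw [setIntegral_indicator measurableSet_Iic, Ioi_inter_Iic, intervalIntegral.integral_of_le pi_pos.le]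
  have : ∫ u in Ioc 0 π, exp (-(2 * (s * sin (u / 2))^2)) =
      exp (-s^2) * ∫ u in Ioc 0 π, exp (s^2 * cos u) := by
    rw [← integral_const_mul]
    congr 1; ext u
    rw [← exp_add, cos_eq_sin_half]; congr 1; ring
  rw [this]; ring

lemma I0_dom (s : ℝ) (hs : 0 < s) (v : ℝ) (hv : v ∈ Ioi (0:ℝ)) :
    ‖(Iic π).indicator (fun u => exp (-(2 * (s * sin (u / 2))^2))) (s⁻¹ * v)‖ ≤
      exp (-(2/π^2) * v^2) := by
  by_cases h : s⁻¹ * v ∈ Iic π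
  · rw [indicator_of_mem h, norm_of_nonneg (exp_pos _).le]
    gcongr
    have h1 := cos_le_one_sub_mul_cos_sq (x := s⁻¹ * v)
      (by rw [abs_of_pos (mul_pos (inv_pos.2 hs) hv)]; exact h)
    rw [cos_eq_sin_half] at h1
    have e : v = s * (s⁻¹ * v) := by field_simp
    have e2 : v^2 = s^2 * (s⁻¹ * v)^2 := by rw [← mul_pow, ← e]
    rw [e2, mul_pow]
    nlinarith [sq_nonneg s, mul_le_mul_of_nonneg_left h1 (sq_nonneg s)]
  · rw [indicator_of_notMem h]; simp; positivity

lemma I0_meas (s : ℝ) : Measurable fun v : ℝ =>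
    (Iic π).indicator (fun u => exp (-(2 * (s * sin (u / 2))^2))) (s⁻¹ * v) :=
  Measurable.comp (Measurable.indicator (by fun_prop) measurableSet_Iic) (by fun_prop)

lemma I0_asymp' : Tendsto (fun s => s * exp (-s^2) * I0 (s^2)) atTop (𝓝 ((1/π) * √(π/2))) := by
  have hl : ∫ v in Ioi (0:ℝ), exp (-(2 * (v/2)^2)) = √(π/2) := by
    have := integral_gaussian_Ioi (1/2)
    have e : √(π / (1/2)) / 2 = √(π/2) := by
      rw [show π / (1/2) = 2^2 * (π/2) by ring, sqrt_mul (by norm_num), sqrt_sq (by norm_num)]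
      ring
    rw [← e, ← this]
    congr 1; ext v; congr 1; ring
  rw [← hl]
  have hc : ∀ᶠ s : ℝ in atTop, (1/π) * ∫ v in Ioi (0:ℝ), (Iic π).indicator
      (fun u => exp (-(2 * (s * sin (u / 2))^2))) (s⁻¹ * v) = s * exp (-s^2) * I0 (s^2) := by
    filter_upwards [eventually_gt_atTop 0] with s hs using (I0_scale s hs).symm
  refine Tendsto.congr' hc (Tendsto.const_mul _ ?_)
  refine tendsto_integral_filter_of_dominated_convergence (fun v => exp (-(2/π^2) * v^2)) ?_ ?_ ?_ ?_
  · exact Eventually.of_forall fun s => (I0_meas s).aestronglyMeasurable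
  · filter_upwards [eventually_gt_atTop 0] with s hs
    exact (ae_restrict_iff' measurableSet_Ioi).2 (Eventually.of_forall fun v hv => I0_dom s hs v hv)
  · exact (integrable_exp_neg_mul_sq (by positivity)).integrableOn
  · refine Eventually.of_forall fun v => ?_
    have := slope_lim sin (by simpa using hasDerivAt_sin 0) sin_zero v
    refine Tendsto.congr' ?_ ((this.pow 2).const_mul 2).neg.rexp
    have h5 : Tendsto (fun s : ℝ => s⁻¹ * v) atTop (𝓝 0) := by
      simpa using tendsto_inv_atTop_zero.mul_const v
    filter_upwards [h5.eventually_le_const pi_pos] with s hs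
    rw [indicator_of_mem (by exact hs)]

lemma I0_asymp : Tendsto (fun t => √t * exp (-t) * I0 t) atTop (𝓝 ((1/π) * √(π/2))) := by
  refine (I0_asymp'.comp tendsto_sqrt_atTop).congr' ?_
  filter_upwards [eventually_ge_atTop 0] with t ht
  simp [sq_sqrt ht]

lemma I0_le' (t : ℝ) (ht : 0 < t) : I0 t ≤ exp t / √t := by
  have hs : 0 < √t := sqrt_pos.2 ht
  have h := I0_scale (√t) hs
  rw [sq_sqrt ht.le] at h
  have hle : ∫ v in Ioi (0:ℝ), (Iic π).indicator
      (fun u => exp (-(2 * (√t * sin (u / 2))^2))) ((√t)⁻¹ * v) ≤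
      ∫ v in Ioi (0:ℝ), exp (-(2/π^2) * v^2) := by
    have hg : IntegrableOn (fun v : ℝ => exp (-(2/π^2) * v^2)) (Ioi 0) :=
      (integrable_exp_neg_mul_sq (by positivity)).integrableOn
    apply setIntegral_mono_on _ hg measurableSet_Ioi
    · intro v hv
      exact (le_abs_self _).trans (I0_dom (√t) hs v hv)
    · refine hg.mono' (I0_meas _).aestronglyMeasurable ?_
      exact (ae_restrict_iff' measurableSet_Ioi).2 (Eventually.of_forall fun v hv => I0_dom _ hs v hv)
  rw [integral_gaussian_Ioi] at hle
  have h3 : √(π / (2/π^2)) / 2 ≤ π := by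
    rw [div_le_iff₀ (by norm_num)]
    apply sqrt_le_iff.2
    refine ⟨by positivity, ?_⟩
    rw [div_div_eq_mul_div, div_le_iff₀ (by norm_num)]
    nlinarith [pi_le_four, pi_pos, sq_nonneg π]
  have h4 : √t * exp (-t) * I0 t ≤ 1 := by
    rw [h, one_div, inv_mul_le_iff₀ pi_pos]; linarith
  rw [le_div_iff₀ hs]
  have : exp t * (√t * exp (-t) * I0 t) = I0 t * √t := by
    have : exp t * exp (-t) = 1 := by rw [← exp_add]; simp
    linear_combination √t * I0 t * this
  rw [← this]
  nlinarith [exp_pos t]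


noncomputable def PJ (t : ℝ) : ℝ := t * I1 t
noncomputable def PQ (t : ℝ) : ℝ := -(t * KK 1 t)

noncomputable def PP : ℕ → ℝ → ℝ
  | 0 => fun t => I0 t * K0 t ^ 3
  | 1 => fun t => PJ t * K0 t ^ 3 + 3 * I0 t * K0 t ^ 2 * PQ t
  | 2 => fun t => 6 * I0 t * K0 t * PQ t ^ 2 + 6 * PJ t * K0 t ^ 2 * PQ t
  | 3 => fun t => 6 * I0 t * PQ t ^ 3 + 18 * PJ t * K0 t * PQ t ^ 2
  | 4 => fun t => 24 * PJ t * PQ t ^ 3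
  | _ => fun _ => 0

lemma PP_hasDerivAt (k : ℕ) (hk : k < 5) (t : ℝ) (ht : 0 < t) :
    HasDerivAt (PP k) ((PP (k+1) t + k * (5 - k) * t^2 * PP (k-1) t) / t) t := by
  have hI : HasDerivAt I0 (PJ t / t) t :=
    (I0_hasDerivAt t).congr_deriv (by unfold PJ; field_simp)
  have hJ : HasDerivAt PJ (t * I0 t) t := tI1_hasDerivAt t
  have hK : HasDerivAt K0 (PQ t / t) t :=
    (K0_hasDerivAt t ht).congr_deriv (by unfold PQ; field_simp)
  have hQ : HasDerivAt PQ (t * K0 t) t :=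
    ((tK1_hasDerivAt t ht).neg).congr_deriv (by ring)
  interval_cases k
  · exact (hI.mul (hK.pow 3)).congr_deriv (by simp [PP]; field_simp)
  · refine ((hJ.mul (hK.pow 3)).add (((hI.const_mul 3).mul (hK.pow 2)).mul hQ)).congr_deriv ?_
    simp [PP]; field_simp; ring
  · refine ((((hI.const_mul 6).mul hK).mul (hQ.pow 2)).add
      (((hJ.const_mul 6).mul (hK.pow 2)).mul hQ)).congr_deriv ?_
    simp [PP]; field_simp; ring
  · refine (((hI.const_mul 6).mul (hQ.pow 3)).add
      (((hJ.const_mul 18).mul hK).mul (hQ.pow 2))).congr_deriv ?_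
    simp [PP]; field_simp; ring
  · refine ((hJ.const_mul 24).mul (hQ.pow 3)).congr_deriv ?_
    simp [PP]; field_simp; ring

lemma PB_bounds (t : ℝ) (ht : 0 < t) : |K0 t| ≤ 6 * exp (-t/2) / √t ∧ |PQ t| ≤ 6 * exp (-t/2) / √t
    ∧ |I0 t| ≤ exp t ∧ |PJ t| ≤ t^2 * exp t := by
  refine ⟨?_, ?_, ?_, ?_⟩
  · rw [abs_of_nonneg (K0_nonneg t)]
    refine (K0_le t ht).trans ?_
    gcongr
    · norm_num
    · linarith
  · unfold PQ
    rw [abs_neg, abs_of_nonneg (mul_nonneg ht.le (KK_nonneg 1 t))]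
    exact tK1_le t ht
  · rw [abs_of_nonneg (I0_nonneg t)]; exact I0_le t ht.le
  · unfold PJ
    rw [abs_of_nonneg (mul_nonneg ht.le (I1_nonneg t ht.le))]
    have := I1_le t ht.le
    nlinarith

lemma cube_eq (t : ℝ) (ht : 0 < t) :
    exp t * (6 * exp (-t/2) / √t)^3 = 216 * (t^(-(3/2):ℝ) * exp (-(1/2)*t)) := by
  have h1 : exp (-t/2)^3 * exp t = exp (-(1/2)*t) := by
    rw [← exp_nat_mul, ← exp_add]; congr 1; push_cast; ring
  have h2 : (√t)⁻¹^3 = t^(-(3/2):ℝ) := by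
    rw [sqrt_eq_rpow, ← rpow_neg ht.le, ← rpow_natCast, ← rpow_mul ht.le]; norm_num
  rw [div_eq_mul_inv, mul_pow, mul_pow, h2, ← h1]; ring

lemma PP_bound (k : ℕ) (t : ℝ) (ht : 0 < t) :
    |PP k t| ≤ 24 * (1 + t^2) * (216 * (t^(-(3/2):ℝ) * exp (-(1/2)*t))) := by
  rw [← cube_eq t ht]
  obtain ⟨hK, hQ, hI, hJ⟩ := PB_bounds t ht
  set B := 6 * exp (-t/2) / √t with hB
  have hB0 : 0 ≤ B := by positivity
  have hE := exp_pos t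
  have e3 : ∀ a b c d : ℝ, |a| ≤ exp t → |b| ≤ B → |c| ≤ B → |d| ≤ B →
      |a * b * c * d| ≤ exp t * B^3 := by
    intro a b c d h1 h2 h3 h4
    rw [abs_mul, abs_mul, abs_mul]
    calc _ ≤ exp t * B * B * B := by gcongr
      _ = _ := by ring
  have e4 : ∀ a b c d : ℝ, |a| ≤ t^2 * exp t → |b| ≤ B → |c| ≤ B → |d| ≤ B →
      |a * b * c * d| ≤ t^2 * (exp t * B^3) := by
    intro a b c d h1 h2 h3 h4
    rw [abs_mul, abs_mul, abs_mul]
    calc _ ≤ t^2 * exp t * B * B * B := by gcongr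
      _ = _ := by ring
  have hP : 0 ≤ exp t * B^3 := by positivity
  have hP2 : 0 ≤ t^2 * (exp t * B^3) := by positivity
  match k with
  | 0 =>
    have h1 := abs_le.1 (e3 _ _ _ _ hI hK hK hK)
    simp only [PP]
    rw [abs_le]; constructor <;> nlinarith
  | 1 =>
    have h1 := abs_le.1 (e4 _ _ _ _ hJ hK hK hK)
    have h2 := abs_le.1 (e3 _ _ _ _ hI hK hK hQ)
    simp only [PP]
    rw [abs_le]; constructor <;> nlinarith
  | 2 =>
    have h1 := abs_le.1 (e4 _ _ _ _ hJ hK hK hQ)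
    have h2 := abs_le.1 (e3 _ _ _ _ hI hK hQ hQ)
    simp only [PP]
    rw [abs_le]; constructor <;> nlinarith
  | 3 =>
    have h1 := abs_le.1 (e4 _ _ _ _ hJ hK hQ hQ)
    have h2 := abs_le.1 (e3 _ _ _ _ hI hQ hQ hQ)
    simp only [PP]
    rw [abs_le]; constructor <;> nlinarith
  | 4 =>
    have h1 := abs_le.1 (e4 _ _ _ _ hJ hQ hQ hQ)
    simp only [PP]
    rw [abs_le]; constructor <;> nlinarith
  | (n+5) => simp only [PP, abs_zero]; positivity

lemma PP4_bound (t : ℝ) (ht : 0 < t) :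
    |PP 4 t| ≤ 24 * t^2 * (216 * (t^(-(3/2):ℝ) * exp (-(1/2)*t))) := by
  rw [← cube_eq t ht]
  obtain ⟨hK, hQ, hI, hJ⟩ := PB_bounds t ht
  set B := 6 * exp (-t/2) / √t with hB
  have hB0 : 0 ≤ B := by positivity
  simp only [PP]
  rw [abs_mul, abs_mul, abs_pow, abs_of_pos (by norm_num : (0:ℝ) < 24)]
  calc _ ≤ 24 * (t^2 * exp t) * B^3 := by gcongr
    _ = _ := by ring

lemma PP_contOn (k : ℕ) : ContinuousOn (PP k) (Ioi 0) := by
  by_cases hk : k < 5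
  · intro t ht
    exact (PP_hasDerivAt k hk t ht).continuousAt.continuousWithinAt
  · obtain ⟨m, rfl⟩ : ∃ m, k = m + 5 := ⟨k - 5, by omega⟩
    exact continuousOn_const

lemma PP_mom_bound (k m : ℕ) (t : ℝ) (ht : 0 < t) :
    |PP k t * t^m| ≤ 5184 * (t^((m:ℝ)-3/2) * exp (-(1/2)*t) + t^((m:ℝ)+1/2) * exp (-(1/2)*t)) := by
  rw [abs_mul, abs_of_pos (pow_pos ht m)]
  have e1 : t^((m:ℝ)-3/2) = t^(-(3/2):ℝ) * t^m := by
    rw [← rpow_natCast t m, ← rpow_add ht]; congr 1; ring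
  have e2 : t^((m:ℝ)+1/2) = t^(-(3/2):ℝ) * t^m * t^2 := by
    rw [← rpow_natCast t m, ← rpow_natCast t 2, ← rpow_add ht, ← rpow_add ht]; congr 1; push_cast; ring
  calc _ ≤ (24 * (1 + t^2) * (216 * (t^(-(3/2):ℝ) * exp (-(1/2)*t)))) * t^m := by
        gcongr; exact PP_bound k t ht
    _ = _ := by rw [e1, e2]; ring

lemma exp_mom_integrable (s : ℝ) (hs : -1 < s) :
    IntegrableOn (fun t : ℝ => t^s * exp (-(1/2)*t)) (Ioi 0) := by
  have := integrableOn_rpow_mul_exp_neg_mul_rpow (p := 1) (s := s) (b := 1/2) hs one_pos (by norm_num)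
  simpa only [rpow_one] using this

lemma PP_mom_integrable (k m : ℕ) (hm : 1 ≤ m) : IntegrableOn (fun t => PP k t * t^m) (Ioi 0) := by
  have hm' : (1:ℝ) ≤ m := by exact_mod_cast hm
  have hg := ((exp_mom_integrable ((m:ℝ)-3/2) (by linarith)).add
    (exp_mom_integrable ((m:ℝ)+1/2) (by linarith))).const_mul 5184
  refine hg.mono' ?_ ?_
  · exact ((PP_contOn k).mul (by fun_prop)).aestronglyMeasurable measurableSet_Ioi
  · exact (ae_restrict_iff' measurableSet_Ioi).2
      (Eventually.of_forall fun t ht => PP_mom_bound k m t ht)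

lemma exp_mom_zero (s : ℝ) (hs : 0 < s) :
    Tendsto (fun t : ℝ => t^s * exp (-(1/2)*t)) (𝓝[>] 0) (𝓝 0) := by
  have h : Continuous (fun t : ℝ => t^s * exp (-(1/2)*t)) :=
    (continuous_rpow_const hs.le).mul (by fun_prop)
  have := h.tendsto 0
  simp only [zero_rpow hs.ne', zero_mul] at this
  exact this.mono_left nhdsWithin_le_nhds

lemma exp_mom_top (s : ℝ) : Tendsto (fun t : ℝ => t^s * exp (-(1/2)*t)) atTop (𝓝 0) :=
  tendsto_rpow_mul_exp_neg_mul_atTop_nhds_zero s (1/2) (by norm_num)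

lemma ibp (g g' : ℝ → ℝ) (h : ∀ t, 0 < t → HasDerivAt g (g' t) t) (hi : IntegrableOn g' (Ioi 0))
    (h0 : Tendsto g (𝓝[>] 0) (𝓝 0)) (hg0 : g 0 = 0) (h1 : Tendsto g atTop (𝓝 0)) :
    ∫ t in Ioi (0:ℝ), g' t = 0 := by
  have := integral_Ioi_of_hasDerivAt_of_tendsto (a := 0) (f := g) (f' := g') ?_ (fun t ht => h t ht) hi h1
  · rw [this, hg0, sub_zero]
  · rw [← continuousWithinAt_Ioi_iff_Ici]
    unfold ContinuousWithinAt
    rw [hg0]; exact h0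

noncomputable def mm (k n : ℕ) : ℝ := ∫ t in Ioi (0:ℝ), PP k t * t^(2*n+1)

lemma mm_rel (k n : ℕ) (hk : k < 5) :
    (2*n+2) * mm k n + mm (k+1) n + k * (5-k) * mm (k-1) (n+1) = 0 := by
  have hmr : ((2*n+2 : ℕ):ℝ) = 2*(n:ℝ)+2 := by push_cast; ring
  have hn0 : (0:ℝ) ≤ n := Nat.cast_nonneg n
  have h := ibp (fun t => PP k t * t^(2*n+2)) (fun t => (2*n+2) * (PP k t * t^(2*n+1)) +
    PP (k+1) t * t^(2*n+1) + k * (5-k) * (PP (k-1) t * t^(2*(n+1)+1))) ?_ ?_ ?_ ?_ ?_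
  · have i1 := (PP_mom_integrable k (2*n+1) (by omega)).const_mul (2*(n:ℝ)+2)
    have i2 := (PP_mom_integrable (k+1) (2*n+1) (by omega))
    have i3 := (PP_mom_integrable (k-1) (2*(n+1)+1) (by omega)).const_mul ((k:ℝ)*(5-k))
    have i12 : IntegrableOn (fun t => (2*(n:ℝ)+2) * (PP k t * t^(2*n+1)) +
      PP (k+1) t * t^(2*n+1)) (Ioi 0) := i1.add i2
    rw [integral_add i12 i3, integral_add i1 i2, integral_const_mul, integral_const_mul] at h
    exact h
  · intro t ht
    refine ((PP_hasDerivAt k hk t ht).mul (hasDerivAt_pow (2*n+2) t)).congr_deriv ?_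
    rw [hmr]
    simp only [Nat.add_succ_sub_one]
    field_simp
    ring
  · exact (((PP_mom_integrable k (2*n+1) (by omega)).const_mul (2*(n:ℝ)+2)).add
      (PP_mom_integrable (k+1) (2*n+1) (by omega))).add
      ((PP_mom_integrable (k-1) (2*(n+1)+1) (by omega)).const_mul ((k:ℝ)*(5-k)))
  · have hb := ((exp_mom_zero (((2*n+2:ℕ):ℝ)-3/2) (by rw [hmr]; linarith)).add
      (exp_mom_zero (((2*n+2:ℕ):ℝ)+1/2) (by rw [hmr]; linarith))).const_mul 5184
    simp only [add_zero, mul_zero] at hb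
    refine squeeze_zero_norm' ?_ hb
    filter_upwards [self_mem_nhdsWithin] with t ht
    exact PP_mom_bound k (2*n+2) t ht
  · simp
  · have hb := ((exp_mom_top (((2*n+2:ℕ):ℝ)-3/2)).add
      (exp_mom_top (((2*n+2:ℕ):ℝ)+1/2))).const_mul 5184
    simp only [add_zero, mul_zero] at hb
    refine squeeze_zero_norm' ?_ hb
    filter_upwards [eventually_gt_atTop 0] with t ht
    exact PP_mom_bound k (2*n+2) t ht

lemma mm_three : mm 3 0 = 0 := by
  have hb4 : ∀ t : ℝ, 0 < t → ‖PP 4 t‖ ≤ 5184 * (t^(1/2:ℝ) * exp (-(1/2)*t)) := by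
    intro t ht
    have e2 : t^(1/2:ℝ) = t^(-(3/2):ℝ) * t^2 := by
      rw [← rpow_natCast t 2, ← rpow_add ht]; congr 1; push_cast; ring
    refine (PP4_bound t ht).trans (le_of_eq ?_)
    rw [e2]; ring
  have h := ibp (PP 4) (fun t => 4 * (PP 3 t * t^(2*0+1))) ?_ ?_ ?_ ?_ ?_
  · rw [integral_const_mul] at h
    unfold mm
    linarith
  · intro t ht
    refine (PP_hasDerivAt 4 (by norm_num) t ht).congr_deriv ?_
    have : PP 5 t = 0 := rfl
    simp only [this]
    norm_num
    field_simp
  · exact (PP_mom_integrable 3 1 le_rfl).const_mul 4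
  · have hb := (exp_mom_zero (1/2) (by norm_num)).const_mul 5184
    simp only [mul_zero] at hb
    refine squeeze_zero_norm' ?_ hb
    filter_upwards [self_mem_nhdsWithin] with t ht using hb4 t ht
  · simp [PP, PJ]
  · have hb := (exp_mom_top (1/2)).const_mul 5184
    simp only [mul_zero] at hb
    refine squeeze_zero_norm' ?_ hb
    filter_upwards [eventually_gt_atTop 0] with t ht using hb4 t ht

lemma mm_five (n : ℕ) : mm 5 n = 0 := by simp [mm, PP]

lemma MM_one : mm 0 1 = mm 0 0 / 4 := by
  have h0 := mm_rel 0 0 (by norm_num)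
  have h1 := mm_rel 1 0 (by norm_num)
  have h2 := mm_rel 2 0 (by norm_num)
  have h0' := mm_rel 0 1 (by norm_num)
  have h3 := mm_three
  norm_num at h0 h1 h2 h0'
  linarith

lemma MM_rec (n : ℕ) : 128 * (n+2) * mm 0 (n+2) =
   16*(2*n+3)*(5*(n+1)^2+5*(n+1)+2) * mm 0 (n+1) - 32*(n+1)^5 * mm 0 n := by
  have a0 := mm_rel 0 n (by norm_num)
  have a1 := mm_rel 1 n (by norm_num)
  have a2 := mm_rel 2 n (by norm_num)
  have a3 := mm_rel 3 n (by norm_num)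
  have a4 := mm_rel 4 n (by norm_num)
  have b0 := mm_rel 0 (n+1) (by norm_num)
  have b1 := mm_rel 1 (n+1) (by norm_num)
  have b2 := mm_rel 2 (n+1) (by norm_num)
  have c0 := mm_rel 0 (n+2) (by norm_num)
  have h5 := mm_five n
  norm_num at a0 a1 a2 a3 a4 b0 b1 b2 c0
  rw [h5] at a4
  have e1 : mm 1 n = - (2*n+2) * mm 0 n := by linarith
  have f1 : mm 1 (n+1) = - (2*(n+1)+2) * mm 0 (n+1) := by linarith
  have g1 : mm 1 (n+2) = - (2*(n+2)+2) * mm 0 (n+2) := by linarith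
  have e2 : mm 2 n = - (2*n+2) * mm 1 n - 4 * mm 0 (n+1) := by linarith
  have f2 : mm 2 (n+1) = - (2*(n+1)+2) * mm 1 (n+1) - 4 * mm 0 (n+2) := by linarith
  have e3 : mm 3 n = - (2*n+2) * mm 2 n - 6 * mm 1 (n+1) := by linarith
  have f3 : mm 3 (n+1) = - (2*(n+1)+2) * mm 2 (n+1) - 6 * mm 1 (n+2) := by linarith
  have e4 : mm 4 n = - (2*n+2) * mm 3 n - 6 * mm 2 (n+1) := by linarith
  rw [e4, e3, f3, e2, f2, e1, f1, g1] at a4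
  linarith


noncomputable def FF : PowerSeries ℝ := PowerSeries.mk fun n => 1 / (4^n * (n.factorial:ℝ)^2)

noncomputable def th (f : PowerSeries ℝ) : PowerSeries ℝ := 2 * PowerSeries.X * PowerSeries.derivative ℝ f

lemma coeff_th (f : PowerSeries ℝ) (n : ℕ) :
    PowerSeries.coeff n (th f) = 2 * n * PowerSeries.coeff n f := by
  unfold th
  rw [mul_assoc, show (2 : PowerSeries ℝ) = PowerSeries.C (2:ℝ) from (map_ofNat PowerSeries.C 2).symm, PowerSeries.coeff_C_mul]
  cases n with
  | zero => simp
  | succ n => rw [PowerSeries.coeff_succ_X_mul, PowerSeries.coeff_derivative]; push_cast; ring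

noncomputable def GG : PowerSeries ℝ := th FF

lemma th_GG : th GG = PowerSeries.X * FF := by
  ext n
  unfold GG
  rw [coeff_th, coeff_th]
  cases n with
  | zero => simp
  | succ n =>
    rw [PowerSeries.coeff_succ_X_mul]
    simp only [FF, PowerSeries.coeff_mk, Nat.factorial_succ]
    have := Nat.factorial_ne_zero n
    push_cast
    field_simp
    ring

lemma th_mul (f g : PowerSeries ℝ) : th (f * g) = th f * g + f * th g := by
  unfold th; rw [Derivation.leibniz]; simp only [smul_eq_mul]; ring

lemma th_pow (f : PowerSeries ℝ) (n : ℕ) : th (f ^ n) = n * f^(n-1) * th f := by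
  unfold th; rw [Derivation.leibniz_pow]; simp only [smul_eq_mul, nsmul_eq_mul]; ring

noncomputable def PS : ℕ → PowerSeries ℝ
  | 0 => FF^4
  | 1 => 4 * (FF^3 * GG)
  | 2 => 12 * (FF^2 * GG^2)
  | 3 => 24 * (FF * GG^3)
  | 4 => 24 * GG^4
  | _ => 0

lemma th_ofNat (m : ℕ) : th (m : PowerSeries ℝ) = 0 := by
  unfold th; simp

lemma th_PS (k : ℕ) (hk : k < 5) : th (PS k) =
    PS (k+1) + (k * (5 - k) : PowerSeries ℝ) * (PowerSeries.X * PS (k-1)) := by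
  have h4 : th (4 : PowerSeries ℝ) = 0 := th_ofNat 4
  have h12 : th (12 : PowerSeries ℝ) = 0 := th_ofNat 12
  have h24 : th (24 : PowerSeries ℝ) = 0 := th_ofNat 24
  have hF : th FF = GG := rfl
  interval_cases k <;> simp only [PS, th_mul, th_pow, h4, h12, h24, hF, th_GG] <;> push_cast <;> ring

noncomputable def pp (k n : ℕ) : ℝ := PowerSeries.coeff n (PS k)

lemma pp_rel (k n : ℕ) (hk : k < 5) :
    (2*n+2) * pp k (n+1) = pp (k+1) (n+1) + k * (5-k) * pp (k-1) n := by
  have h := congrArg (PowerSeries.coeff (n+1)) (th_PS k hk)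
  rw [coeff_th, map_add] at h
  have e : (k * (5 - k) : PowerSeries ℝ) = PowerSeries.C ((k:ℝ)*(5-k)) := by
    rw [map_mul, map_sub, map_natCast, map_ofNat]
  rw [e, PowerSeries.coeff_C_mul, PowerSeries.coeff_succ_X_mul] at h
  unfold pp
  rw [← h]; push_cast; ring

lemma pp_zero (k : ℕ) (hk : k < 5) : pp (k+1) 0 = 0 := by
  have h := congrArg (PowerSeries.coeff 0) (th_PS k hk)
  rw [coeff_th, map_add] at h
  simpa [pp] using h.symm

lemma pp_five (n : ℕ) : pp 5 n = 0 := by simp [pp, PS]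

lemma pp00 : pp 0 0 = 1 := by
  simp [pp, PS, FF]

lemma pp01 : pp 0 1 = 1 := by
  have h0 := pp_rel 0 0 (by norm_num)
  have h1 := pp_rel 1 0 (by norm_num)
  have h2 := pp_rel 2 0 (by norm_num)
  have h3 := pp_rel 3 0 (by norm_num)
  have h4 := pp_rel 4 0 (by norm_num)
  have z0 := pp_zero 0 (by norm_num)
  have z1 := pp_zero 1 (by norm_num)
  have z2 := pp_zero 2 (by norm_num)
  have h5 := pp_five 1
  norm_num [pp00] at h0 h1 h2 h3 h4 z0 z1 z2
  linarith

lemma pp_rec (n : ℕ) : 32*(n+2)^5 * pp 0 (n+2) =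
   16*(2*n+3)*(5*(n+1)^2+5*(n+1)+2) * pp 0 (n+1) - 128*(n+1) * pp 0 n := by
  have a0 := pp_rel 0 (n+1) (by norm_num)
  have a1 := pp_rel 1 (n+1) (by norm_num)
  have a2 := pp_rel 2 (n+1) (by norm_num)
  have a3 := pp_rel 3 (n+1) (by norm_num)
  have a4 := pp_rel 4 (n+1) (by norm_num)
  have b0 := pp_rel 0 n (by norm_num)
  have b1 := pp_rel 1 n (by norm_num)
  have b2 := pp_rel 2 n (by norm_num)
  have c0 : pp 1 n = 2 * n * pp 0 n := by
    cases n with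
    | zero => simpa using pp_zero 0 (by norm_num)
    | succ n => have := pp_rel 0 n (by norm_num); norm_num at this; push_cast; linarith
  have h5 := pp_five (n+2)
  norm_num at a0 a1 a2 a3 a4 b0 b1 b2
  rw [h5] at a4
  have e1 : pp 1 (n+2) = (2*n+4) * pp 0 (n+2) := by linarith
  have f1 : pp 1 (n+1) = (2*n+2) * pp 0 (n+1) := by linarith
  have e2 : pp 2 (n+2) = (2*n+4) * pp 1 (n+2) - 4 * pp 0 (n+1) := by linarith
  have f2 : pp 2 (n+1) = (2*n+2) * pp 1 (n+1) - 4 * pp 0 n := by linarith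
  have e3 : pp 3 (n+2) = (2*n+4) * pp 2 (n+2) - 6 * pp 1 (n+1) := by linarith
  have f3 : pp 3 (n+1) = (2*n+2) * pp 2 (n+1) - 6 * pp 1 n := by linarith
  have e4 : pp 4 (n+2) = (2*n+4) * pp 3 (n+2) - 6 * pp 2 (n+1) := by linarith
  rw [show n + 1 + 1 = n + 2 by ring] at a4
  rw [e4, e3, f3, e2, f2, e1, f1, c0] at a4
  linarith

lemma MM_formula (n : ℕ) : mm 0 n = mm 0 0 * ((n.factorial:ℝ)^4 / 4^n * pp 0 n) ∧
    mm 0 (n+1) = mm 0 0 * (((n+1).factorial:ℝ)^4 / 4^(n+1) * pp 0 (n+1)) := by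
  induction n with
  | zero => 
    refine ⟨by simp [pp00], ?_⟩
    rw [zero_add, MM_one, pp01]; simp; ring
  | succ n ih =>
    refine ⟨ih.2, ?_⟩
    have h1 := MM_rec n
    have h2 := pp_rec n
    rw [ih.1, ih.2] at h1
    rw [show n+1+1 = n+2 by ring]
    have hn : (n:ℝ)+2 ≠ 0 := by positivity
    have h3 : (128 * ((n:ℝ)+2)) ≠ 0 := by positivity
    apply mul_left_cancel₀ h3
    rw [h1]
    simp only [Nat.factorial_succ, pow_succ (4:ℝ)]
    push_cast
    have h4 : (4:ℝ)^n ≠ 0 := by positivity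
    field_simp
    have e : (n:ℝ)+1+1 = n+2 := by ring
    rw [e]
    linear_combination (-4 * mm 0 0) * h2


lemma hs_mul (f g : PowerSeries ℝ) (hf : ∀ n, 0 ≤ PowerSeries.coeff n f)
    (hg : ∀ n, 0 ≤ PowerSeries.coeff n g) (t a b : ℝ)
    (h1 : HasSum (fun n => PowerSeries.coeff n f * t^(2*n)) a)
    (h2 : HasSum (fun n => PowerSeries.coeff n g * t^(2*n)) b) :
    HasSum (fun n => PowerSeries.coeff n (f*g) * t^(2*n)) (a*b) := by
  have ht : ∀ n, 0 ≤ t^(2*n) := fun n => by rw [pow_mul]; positivity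
  have n1 : Summable fun n => ‖PowerSeries.coeff n f * t^(2*n)‖ := h1.summable.norm
  have n2 : Summable fun n => ‖PowerSeries.coeff n g * t^(2*n)‖ := h2.summable.norm
  have e := tsum_mul_tsum_eq_tsum_sum_antidiagonal_of_summable_norm n1 n2
  have s := (summable_norm_sum_mul_antidiagonal_of_summable_norm n1 n2).of_norm
  rw [h1.tsum_eq, h2.tsum_eq] at e
  rw [e]
  have hh : (fun n => PowerSeries.coeff n (f*g) * t^(2*n)) = fun n => ∑ kl ∈ Finset.HasAntidiagonal.antidiagonal n,
      PowerSeries.coeff kl.1 f * t^(2*kl.1) * (PowerSeries.coeff kl.2 g * t^(2*kl.2)) := by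
    funext n
    rw [PowerSeries.coeff_mul, Finset.sum_mul]
    refine Finset.sum_congr rfl fun kl hkl => ?_
    rw [← Finset.HasAntidiagonal.mem_antidiagonal.1 hkl]
    ring
  rw [hh]
  exact s.hasSum

lemma coeff_mul_nonneg (f g : PowerSeries ℝ) (hf : ∀ n, 0 ≤ PowerSeries.coeff n f)
    (hg : ∀ n, 0 ≤ PowerSeries.coeff n g) (n : ℕ) : 0 ≤ PowerSeries.coeff n (f*g) := by
  rw [PowerSeries.coeff_mul]
  exact Finset.sum_nonneg fun kl _ => mul_nonneg (hf _) (hg _)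

lemma FF_nonneg (n : ℕ) : 0 ≤ PowerSeries.coeff n FF := by
  simp only [FF, PowerSeries.coeff_mk]; positivity

lemma FF2_nonneg (n : ℕ) : 0 ≤ PowerSeries.coeff n (FF^2) := by
  rw [sq]; exact coeff_mul_nonneg _ _ FF_nonneg FF_nonneg n

lemma FF4_nonneg (n : ℕ) : 0 ≤ PowerSeries.coeff n (FF^4) := by
  rw [show FF^4 = FF^2*FF^2 by ring]; exact coeff_mul_nonneg _ _ FF2_nonneg FF2_nonneg n

lemma FF2_hs (t : ℝ) : HasSum (fun n => PowerSeries.coeff n (FF^2) * t^(2*n)) (I0 t^2) := by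
  have := I0_hasSum t
  rw [sq FF, sq]
  refine hs_mul _ _ FF_nonneg FF_nonneg t _ _ ?_ ?_ <;> simpa only [FF, PowerSeries.coeff_mk] using this

lemma pp_nonneg (n : ℕ) : 0 ≤ pp 0 n := FF4_nonneg n

lemma FF4_hs (t : ℝ) : HasSum (fun n => pp 0 n * t^(2*n)) (I0 t^4) := by
  have := hs_mul _ _ FF2_nonneg FF2_nonneg t _ _ (FF2_hs t) (FF2_hs t)
  rw [show FF^2*FF^2 = FF^4 by ring, show I0 t^2*I0 t^2 = I0 t^4 by ring] at this
  exact this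

lemma FF2_coeff (n : ℕ) : PowerSeries.coeff n (FF^2) = (2*n).factorial/(4^n*(n.factorial:ℝ)^4) := by
  rw [sq, PowerSeries.coeff_mul]
  have h1 : ∀ kl ∈ Finset.HasAntidiagonal.antidiagonal n, PowerSeries.coeff kl.1 FF * PowerSeries.coeff kl.2 FF
      = (1/(4^n*(n.factorial:ℝ)^2)) * ((n.choose kl.1 * n.choose kl.2 : ℕ):ℝ) := by
    rintro ⟨i, j⟩ h
    have h := Finset.HasAntidiagonal.mem_antidiagonal.1 h
    simp only at h ⊢
    subst h
    rw [Nat.choose_symm_add.symm, ]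
    rw [Nat.cast_mul, Nat.cast_add_choose ℝ]
    simp only [FF, PowerSeries.coeff_mk]
    have := Nat.factorial_ne_zero i
    have := Nat.factorial_ne_zero j
    have := Nat.factorial_ne_zero (i+j)
    field_simp
    ring
  rw [Finset.sum_congr rfl h1, ← Finset.mul_sum, ← Nat.cast_sum, ← Nat.add_choose_eq,
    Nat.cast_add_choose ℝ, two_mul]
  have := Nat.factorial_ne_zero n
  field_simp

lemma lint_series (u : ℕ → ℝ) (hu : ∀ n, 0 ≤ u n) (g : ℝ → ℝ)
    (hg : ∀ s, HasSum (fun n => u n * s^(2*n)) (g s)) (w : ℝ → ℝ) (hw : ∀ t ∈ Ioi (0:ℝ), 0 ≤ w t)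
    (hwm : ∀ n : ℕ, IntegrableOn (fun t => w t * t^(2*n)) (Ioi 0)) (x : ℝ) :
    ∫⁻ t in Ioi (0:ℝ), ENNReal.ofReal (g (x*t) * w t)
      = ∑' n : ℕ, ENNReal.ofReal (u n * x^(2*n) * ∫ t in Ioi (0:ℝ), w t * t^(2*n)) := by
  have hx : ∀ n, 0 ≤ x^(2*n) := fun n => by rw [pow_mul]; positivity
  have h1 : ∫⁻ t in Ioi (0:ℝ), ENNReal.ofReal (g (x*t) * w t)
      = ∫⁻ t in Ioi (0:ℝ), ∑' n : ℕ, ENNReal.ofReal (u n * x^(2*n) * (w t * t^(2*n))) := by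
    refine setLIntegral_congr_fun measurableSet_Ioi fun t ht => ?_
    have h := (hg (x*t)).mul_right (w t)
    have e : (fun n => u n * (x*t)^(2*n) * w t) = fun n => u n * x^(2*n) * (w t * t^(2*n)) := by
      funext n; rw [mul_pow]; ring
    rw [e] at h
    rw [← h.tsum_eq, ENNReal.ofReal_tsum_of_nonneg _ h.summable]
    intro n
    have := hw t ht
    have : (0:ℝ) < t := ht
    have := hu n
    have := hx n
    positivity
  rw [h1, lintegral_tsum]
  · congr 1; funext n
    rw [← integral_const_mul, ofReal_integral_eq_lintegral_ofReal ((hwm n).const_mul _)]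
    refine (ae_restrict_iff' measurableSet_Ioi).2 (Eventually.of_forall fun t ht => ?_)
    have := hw t ht
    have : (0:ℝ) < t := ht
    have := hu n
    have := hx n
    simp only [Pi.zero_apply]
    positivity
  · intro n
    exact (((hwm n).const_mul _).aestronglyMeasurable.aemeasurable).ennreal_ofReal

noncomputable def AA (a : ℕ) (x : ℝ) : ENNReal :=
  ∫⁻ t in Ioi (0:ℝ), ENNReal.ofReal (I0 (x*t)^4 * (t^a * exp (-(4*t))))

noncomputable def TT (b : ℕ) (x : ℝ) : ENNReal :=
  ∫⁻ t in Ioi (0:ℝ), ENNReal.ofReal (I0 (x*t)^2 * (PP 0 t * t^(2*b+1)))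

lemma mom_exp (m : ℕ) : IntegrableOn (fun t : ℝ => t^m * exp (-(4*t))) (Ioi 0) ∧
    ∫ t in Ioi (0:ℝ), t^m * exp (-(4*t)) = m.factorial / 4^(m+1) := by
  have h := Real.integral_rpow_mul_exp_neg_mul_Ioi (a := (m:ℝ)+1) (r := 4) (by positivity) (by norm_num)
  have h2 := Real.GammaIntegral_convergent (s := (m:ℝ)+1) (by positivity)
  constructor
  · have h3 := (integrableOn_Ioi_comp_mul_left_iff (fun t : ℝ => t^m * exp (-t)) 0 (a := 4) (by norm_num)).2
      (by
        rw [mul_zero]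
        refine h2.congr_fun (fun t ht => ?_) measurableSet_Ioi
        simp only [add_sub_cancel_right, rpow_natCast]; ring)
    have h4 := h3.const_mul ((1/4:ℝ)^m)
    refine IntegrableOn.congr_fun h4 (fun t ht => ?_) measurableSet_Ioi
    simp only [mul_pow, one_div, inv_pow]
    field_simp
  · simp only [add_sub_cancel_right, rpow_natCast] at h
    rw [h, Real.Gamma_nat_eq_factorial, ← Nat.cast_add_one, rpow_natCast]
    simp only [one_div, inv_pow]
    ring

lemma AA_eq (a : ℕ) (x : ℝ) : AA a x = ∑' n : ℕ, ENNReal.ofReal (pp 0 n * x^(2*n) *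
    ((2*n+a).factorial/4^(2*n+a+1))) := by
  have := lint_series (pp 0) pp_nonneg (fun t => I0 t^4) FF4_hs (fun t => t^a * exp (-(4*t)))
    (fun t ht => by have : (0:ℝ) < t := ht
                    positivity)
    (fun n => by
      refine (mom_exp (2*n+a)).1.congr_fun (fun t ht => ?_) measurableSet_Ioi
      simp only; ring) x
  unfold AA
  rw [this]
  congr 1; funext n; congr 2
  rw [← (mom_exp (2*n+a)).2]
  congr 1; funext t; ring

lemma PP0_nonneg (t : ℝ) : 0 ≤ PP 0 t := by
  show 0 ≤ I0 t * K0 t^3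
  have := I0_nonneg t
  have := K0_nonneg t
  positivity

lemma TT_eq (b : ℕ) (x : ℝ) : TT b x = ∑' n : ℕ, ENNReal.ofReal (PowerSeries.coeff n (FF^2) * x^(2*n) *
    mm 0 (n+b)) := by
  have := lint_series (fun n => PowerSeries.coeff n (FF^2)) FF2_nonneg (fun t => I0 t^2) FF2_hs (fun t => PP 0 t * t^(2*b+1))
    (fun t ht => by have : (0:ℝ) < t := ht
                    have := PP0_nonneg t
                    positivity)
    (fun n => by
      refine (PP_mom_integrable 0 (2*(n+b)+1) (by omega)).congr_fun (fun t ht => ?_) measurableSet_Ioi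
      simp only; ring) x
  unfold TT
  rw [this]
  congr 1; funext n; congr 2
  unfold mm
  congr 1; funext t; ring

lemma MM_eq (n : ℕ) : mm 0 n = mm 0 0 * ((n.factorial:ℝ)^4/4^n * pp 0 n) := (MM_formula n).1

lemma MM0_nonneg : 0 ≤ mm 0 0 := by
  unfold mm
  refine setIntegral_nonneg measurableSet_Ioi fun t ht => ?_
  have : (0:ℝ) < t := ht
  have := PP0_nonneg t
  positivity

noncomputable def ee (x : ℝ) (m : ℕ) : ℝ := (2*m).factorial * pp 0 m * x^(2*m) / 16^m

lemma ee_nonneg (x : ℝ) (m : ℕ) : 0 ≤ ee x m := by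
  unfold ee
  have := pp_nonneg m
  have : 0 ≤ x^(2*m) := by rw [pow_mul]; positivity
  positivity

lemma AA0_eq (x : ℝ) : AA 0 x = ∑' n, ENNReal.ofReal (ee x n / 4) := by
  rw [AA_eq]; congr 1; funext n; congr 1
  unfold ee
  rw [add_zero, pow_succ, pow_mul (4:ℝ)]
  norm_num
  field_simp

lemma AA1_eq (x : ℝ) : AA 1 x = ∑' n : ℕ, ENNReal.ofReal (ee x n * (2*n+1) / 16) := by
  rw [AA_eq]; congr 1; funext n; congr 1
  unfold ee
  rw [pow_succ, pow_succ, pow_mul (4:ℝ), Nat.factorial_succ]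
  norm_num
  field_simp
  norm_num

lemma AA2_eq (x : ℝ) : AA 2 x = ∑' n : ℕ, ENNReal.ofReal (ee x n * (2*n+1)*(2*n+2) / 64) := by
  rw [AA_eq]; congr 1; funext n; congr 1
  unfold ee
  rw [pow_succ, pow_succ, pow_succ, pow_mul (4:ℝ), Nat.factorial_succ, Nat.factorial_succ]
  norm_num
  field_simp
  norm_num
  ring

lemma TT0_eq (x : ℝ) : TT 0 x = ENNReal.ofReal (4 * mm 0 0) * AA 0 x := by
  rw [TT_eq, AA0_eq, ← ENNReal.tsum_mul_left]; congr 1; funext n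
  rw [← ENNReal.ofReal_mul (by have := MM0_nonneg; positivity)]
  congr 1
  rw [add_zero, MM_eq, FF2_coeff]
  unfold ee
  have := Nat.factorial_ne_zero n
  rw [show (16:ℝ)^n = 4^n*4^n by rw [← mul_pow]; norm_num]
  field_simp

lemma TT1_eq (x : ℝ) : ENNReal.ofReal (x^2) * TT 1 x = ∑' n : ℕ, ENNReal.ofReal (2 * mm 0 0 * (ee x (n+1) *
    ((n+1:ℝ)^3/(2*n+1)))) := by
  rw [TT_eq, ← ENNReal.tsum_mul_left]; congr 1; funext n
  rw [← ENNReal.ofReal_mul (by positivity)]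
  congr 1
  rw [MM_eq, FF2_coeff]
  unfold ee
  have := Nat.factorial_ne_zero n
  rw [show 2*(n+1) = 2*n+1+1 by ring, Nat.factorial_succ n, Nat.factorial_succ (2*n+1), Nat.factorial_succ (2*n)]
  push_cast
  rw [show (16:ℝ)^(n+1) = 4^n*4^n*16 by rw [← mul_pow]; norm_num [pow_succ], show (4:ℝ)^(n+1) = 4^n*4 by ring]
  field_simp
  ring


lemma TT1_le (x : ℝ) : ENNReal.ofReal (x^2) * TT 1 x ≤ ENNReal.ofReal (16 * mm 0 0) * AA 2 x := by
  have h0 := MM0_nonneg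
  rw [TT1_eq, AA2_eq, ← ENNReal.tsum_mul_left]
  refine le_trans (ENNReal.tsum_le_tsum (fun n => ?_))
    (ENNReal.tsum_comp_le_tsum_of_injective (f := fun n : ℕ => n+1) (fun a b h => by simpa using h) _)
  rw [← ENNReal.ofReal_mul (by positivity)]
  refine ENNReal.ofReal_le_ofReal ?_
  have he := ee_nonneg x (n+1)
  have hk : ((n+1:ℝ)^3/(2*n+1)) ≤ (2*((n+1:ℕ):ℝ)+1)*(2*((n+1:ℕ):ℝ)+2)/8 := by
    push_cast
    rw [div_le_div_iff₀ (by positivity) (by positivity)]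
    have : (0:ℝ) ≤ n := by positivity
    nlinarith [mul_nonneg this this]
  have h2 := mul_le_mul_of_nonneg_left (mul_le_mul_of_nonneg_left hk he) (by positivity : 0 ≤ 2 * mm 0 0)
  refine h2.trans (le_of_eq ?_)
  ring

lemma AA2_le (x : ℝ) : ENNReal.ofReal (16 * mm 0 0) * AA 2 x ≤
    ENNReal.ofReal (x^2) * TT 1 x + ENNReal.ofReal (8 * mm 0 0) * AA 1 x := by
  have h0 := MM0_nonneg
  rw [TT1_eq, AA2_eq, AA1_eq, ← ENNReal.tsum_mul_left, ← ENNReal.tsum_mul_left,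
    tsum_eq_zero_add' ENNReal.summable,
    tsum_eq_zero_add' (f := fun n : ℕ => ENNReal.ofReal (8 * mm 0 0) * ENNReal.ofReal (ee x n * (2*n+1)/16)) ENNReal.summable,
    add_left_comm, ← ENNReal.tsum_add]
  have he0 := ee_nonneg x 0
  refine add_le_add ?_ (ENNReal.tsum_le_tsum fun n => ?_)
  · rw [← ENNReal.ofReal_mul (by positivity), ← ENNReal.ofReal_mul (by positivity)]
    refine ENNReal.ofReal_le_ofReal (le_of_eq ?_)
    push_cast; ring
  · have he := ee_nonneg x (n+1)
    rw [← ENNReal.ofReal_mul (by positivity), ← ENNReal.ofReal_mul (by positivity),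
      ← ENNReal.ofReal_add (by positivity) (by positivity)]
    refine ENNReal.ofReal_le_ofReal ?_
    have hk : (2*((n+1:ℕ):ℝ)+1)*(2*((n+1:ℕ):ℝ)+2)/8 ≤ ((n+1:ℝ)^3/(2*n+1)) + (2*((n+1:ℕ):ℝ)+1)/4 := by
      push_cast
      rw [div_add_div _ _ (by positivity) (by positivity), div_le_div_iff₀ (by positivity) (by positivity)]
      have : (0:ℝ) ≤ n := by positivity
      nlinarith [mul_nonneg this this]
    have h2 := mul_le_mul_of_nonneg_left (mul_le_mul_of_nonneg_left hk he) (by positivity : 0 ≤ 2 * mm 0 0)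
    refine le_trans (le_of_eq ?_) (h2.trans (le_of_eq ?_)) <;> ring

lemma lint_scale (g : ℝ → ENNReal) (c : ℝ) (hc : 0 < c) :
    ∫⁻ s in Ioi (0:ℝ), g s = ENNReal.ofReal c * ∫⁻ t in Ioi (0:ℝ), g (c*t) := by
  have him : (fun t => c*t) '' Ioi (0:ℝ) = Ioi 0 := by
    ext y; constructor
    · rintro ⟨t, ht, rfl⟩; exact mul_pos hc ht
    · intro hy; exact ⟨y/c, div_pos hy hc, by field_simp⟩
  have h := lintegral_image_eq_lintegral_abs_deriv_mul (s := Ioi (0:ℝ)) (f := fun t => c*t) (f' := fun _ => c)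
    measurableSet_Ioi (fun t _ => ((hasDerivAt_id t).const_mul c |>.congr_deriv (by simp)).hasDerivWithinAt)
    (fun a _ b _ h => by simpa [hc.ne'] using h) g
  rw [him] at h
  rw [h, abs_of_pos hc, lintegral_const_mul' _ _ ENNReal.ofReal_ne_top]

lemma abel (Φ : ℝ → ℝ → ℝ) (C p L : ℝ) (hC : 0 ≤ C) (hp : 0 < p) (hL : 0 ≤ L)
    (hb : ∀ x ∈ Ioo (1/2:ℝ) 1, ∀ t, 0 < t → Φ x t ≤ C)
    (hc : ∀ x ∈ Ioo (1/2:ℝ) 1, ContinuousOn (Φ x) (Ioi 0))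
    (hl : ∀ s, 0 < s → Tendsto (fun x => Φ x (s/(1-x))) (𝓝[<] 1) (𝓝 L)) :
    Tendsto (fun x => ENNReal.ofReal (1-x) * ∫⁻ t in Ioi (0:ℝ), ENNReal.ofReal (Φ x t * exp (-(p*(1-x)*t))))
      (𝓝[<] 1) (𝓝 (ENNReal.ofReal (L/p))) := by
  have hev : ∀ᶠ x : ℝ in 𝓝[<] 1, x ∈ Ioo (1/2:ℝ) 1 := Ioo_mem_nhdsLT (by norm_num)
  have hint : IntegrableOn (fun s : ℝ => exp (-p*s)) (Ioi 0) := by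
    simpa using integrableOn_exp_mul_Ioi (a := -p) (by linarith) 0
  have hval : ∫⁻ s in Ioi (0:ℝ), ENNReal.ofReal (L * exp (-p*s)) = ENNReal.ofReal (L/p) := by
    rw [← ofReal_integral_eq_lintegral_ofReal (hint.const_mul L)
      (Eventually.of_forall fun s => by simp only [Pi.zero_apply]; positivity),
      integral_const_mul, integral_exp_mul_Ioi (by linarith)]
    congr 1; simp; field_simp
  rw [← hval]
  have hD : Tendsto (fun x => ∫⁻ s in Ioi (0:ℝ), ENNReal.ofReal (Φ x (s/(1-x)) * exp (-p*s))) (𝓝[<] 1)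
      (𝓝 (∫⁻ s in Ioi (0:ℝ), ENNReal.ofReal (L * exp (-p*s)))) := by
    have hD2 : Tendsto (fun x => ∫⁻ s in Ioi (0:ℝ),
        (Ioi (0:ℝ)).piecewise (fun s => ENNReal.ofReal (Φ x (s/(1-x)) * exp (-p*s))) (fun _ => 0) s) (𝓝[<] 1)
        (𝓝 (∫⁻ s in Ioi (0:ℝ), ENNReal.ofReal (L * exp (-p*s)))) := by
      refine tendsto_lintegral_filter_of_dominated_convergence (fun s => ENNReal.ofReal (C * exp (-p*s))) ?_ ?_ ?_ ?_
      · filter_upwards [hev] with x hx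
        have h1 : 0 < 1 - x := by linarith [hx.2]
        refine ContinuousOn.measurable_piecewise ?_ continuousOn_const measurableSet_Ioi
        refine ENNReal.continuous_ofReal.comp_continuousOn (ContinuousOn.mul ?_ (by fun_prop))
        exact (hc x hx).comp (by fun_prop) (fun s hs => div_pos hs h1)
      · filter_upwards [hev] with x hx
        have h1 : 0 < 1 - x := by linarith [hx.2]
        refine (ae_restrict_iff' measurableSet_Ioi).2 (Eventually.of_forall fun s hs => ?_)
        rw [Set.piecewise_eq_of_mem _ _ _ hs]
        refine ENNReal.ofReal_le_ofReal ?_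
        gcongr
        exact hb x hx _ (div_pos hs h1)
      · rw [← ofReal_integral_eq_lintegral_ofReal (hint.const_mul C)
          (Eventually.of_forall fun s => by simp only [Pi.zero_apply]; positivity)]
        exact ENNReal.ofReal_ne_top
      · refine (ae_restrict_iff' measurableSet_Ioi).2 (Eventually.of_forall fun s hs => ?_)
        simp only [Set.piecewise_eq_of_mem _ _ _ hs]
        exact (ENNReal.continuous_ofReal.tendsto _).comp ((hl s hs).mul_const _)
    refine hD2.congr fun x => ?_
    refine setLIntegral_congr_fun measurableSet_Ioi fun s hs => ?_
    rw [Set.piecewise_eq_of_mem _ _ _ hs]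
  refine hD.congr' ?_
  filter_upwards [hev] with x hx
  have h1 : 0 < 1 - x := by linarith [hx.2]
  rw [lint_scale _ (1-x) h1]
  congr 1
  refine setLIntegral_congr_fun measurableSet_Ioi fun t ht => ?_
  rw [mul_div_cancel_left₀ _ h1.ne']
  congr 3; ring

noncomputable def al (s : ℝ) : ℝ := √s * exp (-s) * I0 s
noncomputable def be (s : ℝ) : ℝ := exp (-s) * I0 s
noncomputable def ka (s : ℝ) : ℝ := √s * exp s * K0 s

lemma al_nonneg (s : ℝ) : 0 ≤ al s := by
  have := I0_nonneg s
  unfold al; positivity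
lemma be_nonneg (s : ℝ) : 0 ≤ be s := by
  have := I0_nonneg s
  unfold be; positivity
lemma ka_nonneg (s : ℝ) : 0 ≤ ka s := by
  have := K0_nonneg s
  unfold ka; positivity
lemma al_le (s : ℝ) (hs : 0 < s) : al s ≤ 1 := by
  unfold al
  have h := I0_le' s hs
  have hq : 0 < √s := sqrt_pos.2 hs
  calc √s * exp (-s) * I0 s ≤ √s * exp (-s) * (exp s/√s) := by gcongr
    _ = 1 := by rw [exp_neg]; field_simp
lemma be_le (s : ℝ) (hs : 0 ≤ s) : be s ≤ 1 := by
  unfold be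
  have h := I0_le s hs
  calc exp (-s) * I0 s ≤ exp (-s) * exp s := by gcongr
    _ = 1 := by rw [exp_neg]; field_simp
lemma ka_le (s : ℝ) (hs : 0 < s) : ka s ≤ 2 := by
  unfold ka
  have h := K0_le s hs
  have hq : 0 < √s := sqrt_pos.2 hs
  calc √s * exp s * K0 s ≤ √s * exp s * (2*exp (-s)/√s) := by gcongr
    _ = 2 := by rw [exp_neg]; field_simp

lemma al_cont : Continuous al := by
  have := I0_continuous
  unfold al; fun_prop
lemma be_cont : Continuous be := by
  have := I0_continuous
  unfold be; fun_prop
lemma ka_contOn : ContinuousOn ka (Ioi 0) := by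
  have : ContinuousOn K0 (Ioi 0) := fun t ht => (K0_hasDerivAt t ht).continuousAt.continuousWithinAt
  unfold ka; fun_prop

lemma be_tendsto : Tendsto be atTop (𝓝 0) := by
  have h := I0_asymp.mul (tendsto_inv_atTop_zero.comp tendsto_sqrt_atTop)
  rw [mul_zero] at h
  refine h.congr' ?_
  filter_upwards [eventually_gt_atTop 0] with s hs
  have hq : 0 < √s := sqrt_pos.2 hs
  simp only [Function.comp_apply, be]
  field_simp

lemma td1 (s : ℝ) (hs : 0 < s) : Tendsto (fun x : ℝ => s/(1-x)) (𝓝[<] 1) atTop := by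
  have h1 : Tendsto (fun x : ℝ => 1-x) (𝓝[<] 1) (𝓝[>] 0) := by
    rw [tendsto_nhdsWithin_iff]
    constructor
    · have : Tendsto (fun x : ℝ => 1-x) (𝓝 1) (𝓝 (1-1)) := (by fun_prop : Continuous fun x : ℝ => 1-x).tendsto 1
      rw [sub_self] at this
      exact this.mono_left nhdsWithin_le_nhds
    · filter_upwards [self_mem_nhdsWithin] with x hx
      have : x < 1 := hx
      simpa using this
  exact (tendsto_inv_nhdsGT_zero.comp h1).const_mul_atTop hs

lemma tid : Tendsto (fun x : ℝ => x) (𝓝[<] 1) (𝓝 1) := nhdsWithin_le_nhds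

lemma td2 (s : ℝ) (hs : 0 < s) : Tendsto (fun x : ℝ => x * (s/(1-x))) (𝓝[<] 1) atTop :=
  Tendsto.pos_mul_atTop one_pos tid (td1 s hs)

lemma tinv (k : ℕ) : Tendsto (fun x : ℝ => (x⁻¹)^k) (𝓝[<] 1) (𝓝 1) := by
  have := (tid.inv₀ one_ne_zero).pow k
  simpa using this

lemma inv_bd (x : ℝ) (hx : x ∈ Ioo (1/2:ℝ) 1) : 0 < x⁻¹ ∧ x⁻¹ ≤ 2 := by
  have : 0 < x := by linarith [hx.1]
  refine ⟨by positivity, ?_⟩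
  rw [inv_le_comm₀ this two_pos]; linarith [hx.1]

lemma AA2_lim : Tendsto (fun x => ENNReal.ofReal (1-x) * AA 2 x) (𝓝[<] 1) (𝓝 (ENNReal.ofReal (1/(16*π^2)))) := by
  have h := abel (fun x t => (x⁻¹)^2 * al (x*t)^4) (2^2*1^4) 4 (1*((1/π)*√(π/2))^4) (by norm_num) (by norm_num) (by positivity)
    (fun x hx t ht => by
      have hx0 : 0 < x := by linarith [hx.1]
      have := inv_bd x hx
      have := al_le (x*t) (by positivity)
      have := al_nonneg (x*t)
      gcongr
      exact (inv_bd x hx).2)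
    (fun x hx => by have := al_cont; fun_prop)
    (fun s hs => (tinv 2).mul ((I0_asymp.comp (td2 s hs)).pow 4))
  have e : 1*((1/π)*√(π/2))^4/4 = 1/(16*π^2) := by
    rw [one_mul, mul_pow, show √(π/2)^4 = (√(π/2)^2)^2 by ring, sq_sqrt (by positivity)]
    field_simp; norm_num
  rw [e] at h
  refine h.congr' ?_
  have hev : ∀ᶠ x : ℝ in 𝓝[<] 1, x ∈ Ioo (1/2:ℝ) 1 := Ioo_mem_nhdsLT (by norm_num)
  filter_upwards [hev] with x hx
  congr 1
  refine setLIntegral_congr_fun measurableSet_Ioi fun t ht => ?_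
  have hx0 : 0 < x := by linarith [hx.1]
  have ht0 : 0 < t := ht
  simp only [al]
  congr 1
  rw [mul_pow, mul_pow, show √(x*t)^4 = (√(x*t)^2)^2 by ring, sq_sqrt (by positivity), ← exp_nat_mul,
    show -(4*t) = ((4:ℕ):ℝ)*(-(x*t)) + -(4*(1-x)*t) by push_cast; ring, exp_add]
  field_simp

lemma AA1_lim : Tendsto (fun x => ENNReal.ofReal (1-x) * AA 1 x) (𝓝[<] 1) (𝓝 0) := by
  have h := abel (fun x t => (x⁻¹)^1 * al (x*t)^2 * be (x*t)^2) (2^1*1^2*1^2) 4 (1*((1/π)*√(π/2))^2*0^2) (by norm_num) (by norm_num) (by positivity)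
    (fun x hx t ht => by
      have hx0 : 0 < x := by linarith [hx.1]
      have := inv_bd x hx
      have := al_le (x*t) (by positivity)
      have := al_nonneg (x*t)
      have := be_le (x*t) (by positivity)
      have := be_nonneg (x*t)
      gcongr
      exact (inv_bd x hx).2)
    (fun x hx => by
      have := al_cont
      have := be_cont
      fun_prop)
    (fun s hs => ((tinv 1).mul ((I0_asymp.comp (td2 s hs)).pow 2)).mul ((be_tendsto.comp (td2 s hs)).pow 2))
  have e : 1*((1/π)*√(π/2))^2*0^2/4 = 0 := by simp
  rw [e, ENNReal.ofReal_zero] at h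
  refine h.congr' ?_
  have hev : ∀ᶠ x : ℝ in 𝓝[<] 1, x ∈ Ioo (1/2:ℝ) 1 := Ioo_mem_nhdsLT (by norm_num)
  filter_upwards [hev] with x hx
  congr 1
  refine setLIntegral_congr_fun measurableSet_Ioi fun t ht => ?_
  have hx0 : 0 < x := by linarith [hx.1]
  have ht0 : 0 < t := ht
  simp only [al, be]
  congr 1
  rw [mul_pow, mul_pow, mul_pow, sq_sqrt (by positivity), ← exp_nat_mul,
    show -(4*t) = ((2:ℕ):ℝ)*(-(x*t)) + ((2:ℕ):ℝ)*(-(x*t)) + -(4*(1-x)*t) by push_cast; ring, exp_add, exp_add]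
  field_simp

lemma TT1_lim : Tendsto (fun x => ENNReal.ofReal (1-x) * TT 1 x) (𝓝[<] 1) (𝓝 (ENNReal.ofReal (1/16))) := by
  have h := abel (fun x t => (x⁻¹)^1 * al (x*t)^2 * (al t * ka t^3)) (2^1*1^2*(1*2^3)) 2
    (1*((1/π)*√(π/2))^2*((1/π)*√(π/2)*√(π/2)^3)) (by norm_num) (by norm_num) (by positivity)
    (fun x hx t ht => by
      have hx0 : 0 < x := by linarith [hx.1]
      have := inv_bd x hx
      have := al_le (x*t) (by positivity)
      have := al_nonneg (x*t)
      have := al_le t ht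
      have := al_nonneg t
      have := ka_le t ht
      have := ka_nonneg t
      gcongr
      exact (inv_bd x hx).2)
    (fun x hx => by
      have := al_cont
      have := ka_contOn
      fun_prop)
    (fun s hs => ((tinv 1).mul ((I0_asymp.comp (td2 s hs)).pow 2)).mul
      ((I0_asymp.comp (td1 s hs)).mul ((K0_asymp.comp (td1 s hs)).pow 3)))
  have e : 1*((1/π)*√(π/2))^2*((1/π)*√(π/2)*√(π/2)^3)/2 = 1/16 := by
    rw [show 1*((1/π)*√(π/2))^2*((1/π)*√(π/2)*√(π/2)^3)/2 = (1/π)^3*(√(π/2)^2)^3/2 by ring, sq_sqrt (by positivity)]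
    field_simp; norm_num
  rw [e] at h
  refine h.congr' ?_
  have hev : ∀ᶠ x : ℝ in 𝓝[<] 1, x ∈ Ioo (1/2:ℝ) 1 := Ioo_mem_nhdsLT (by norm_num)
  filter_upwards [hev] with x hx
  congr 1
  refine setLIntegral_congr_fun measurableSet_Ioi fun t ht => ?_
  have hx0 : 0 < x := by linarith [hx.1]
  have ht0 : 0 < t := ht
  have hPP : PP 0 t = I0 t * K0 t^3 := rfl
  simp only [al, ka, hPP]
  congr 1
  have hq : √t^4 = t^2 := by rw [show √t^4 = (√t^2)^2 by ring, sq_sqrt ht0.le]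
  have hexp : exp (-(x*t))^2 * exp (-t) * exp t^3 * exp (-(2*(1-x)*t)) = 1 := by
    rw [← exp_nat_mul, ← exp_nat_mul, ← exp_add, ← exp_add, ← exp_add, exp_eq_one_iff]; push_cast; ring
  calc _ = x⁻¹ * √(x*t)^2 * √t^4 * (exp (-(x*t))^2 * exp (-t) * exp t^3 * exp (-(2*(1-x)*t))) * (I0 (x*t)^2 * (I0 t * K0 t^3)) := by ring
    _ = _ := by
      rw [hexp, hq, sq_sqrt (by positivity)]
      field_simp
      ring

lemma mm00 : mm 0 0 = π^2/16 := by
  have h0 := MM0_nonneg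
  have hx2 : Tendsto (fun x : ℝ => ENNReal.ofReal (x^2)) (𝓝[<] 1) (𝓝 1) := by
    have := ENNReal.tendsto_ofReal (tid.pow 2)
    simpa using this
  have hT : Tendsto (fun x => ENNReal.ofReal (x^2) * (ENNReal.ofReal (1-x) * TT 1 x)) (𝓝[<] 1)
      (𝓝 (1 * ENNReal.ofReal (1/16))) :=
    ENNReal.Tendsto.mul hx2 (Or.inl one_ne_zero) TT1_lim (Or.inr ENNReal.one_ne_top)
  have hA2 : Tendsto (fun x => ENNReal.ofReal (16 * mm 0 0) * (ENNReal.ofReal (1-x) * AA 2 x)) (𝓝[<] 1)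
      (𝓝 (ENNReal.ofReal (16 * mm 0 0) * ENNReal.ofReal (1/(16*π^2)))) :=
    ENNReal.Tendsto.const_mul AA2_lim (Or.inr ENNReal.ofReal_ne_top)
  have hA1 : Tendsto (fun x => ENNReal.ofReal (8 * mm 0 0) * (ENNReal.ofReal (1-x) * AA 1 x)) (𝓝[<] 1)
      (𝓝 (ENNReal.ofReal (8 * mm 0 0) * 0)) :=
    ENNReal.Tendsto.const_mul AA1_lim (Or.inr ENNReal.ofReal_ne_top)
  have i1 := le_of_tendsto_of_tendsto' hT hA2 (fun x => by
    have := mul_le_mul_right (TT1_le x) (ENNReal.ofReal (1-x))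
    rw [mul_left_comm, mul_left_comm (ENNReal.ofReal (16 * mm 0 0))]; exact this)
  have i2 := le_of_tendsto_of_tendsto' hA2 (hT.add hA1) (fun x => by
    have := mul_le_mul_right (AA2_le x) (ENNReal.ofReal (1-x))
    rw [mul_add] at this
    rw [mul_left_comm, mul_left_comm (ENNReal.ofReal (x^2)), mul_left_comm (ENNReal.ofReal (8 * mm 0 0))]; exact this)
  rw [mul_zero, add_zero] at i2
  have i3 := le_antisymm i1 i2
  rw [one_mul, ← ENNReal.ofReal_mul (by positivity), ENNReal.ofReal_eq_ofReal_iff (by positivity) (by positivity)] at i3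
  have := pi_pos
  field_simp at i3
  linarith


lemma AA0_one : AA 0 1 ≠ ⊤ := by
  have hi : Integrable (fun t : ℝ => 2 * (1+t^2)⁻¹) := integrable_inv_one_add_sq.const_mul 2
  have h : AA 0 1 ≤ ∫⁻ t in Ioi (0:ℝ), ENNReal.ofReal (2 * (1+t^2)⁻¹) := by
    refine setLIntegral_mono' measurableSet_Ioi fun t ht => ENNReal.ofReal_le_ofReal ?_
    have ht0 : 0 < t := ht
    have h1 : be t^4 ≤ 1 := pow_le_one₀ (be_nonneg t) (be_le t ht0.le)
    have h2 : al t^4 ≤ 1 := pow_le_one₀ (al_nonneg t) (al_le t ht0)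
    have h3 : al t^4 = t^2 * be t^4 := by
      rw [show al t = √t * be t by unfold al be; ring, mul_pow, show √t^4 = (√t^2)^2 by ring, sq_sqrt ht0.le]
    have h4 : I0 (1*t)^4 * (t^0 * exp (-(4*t))) = be t^4 := by
      unfold be
      rw [mul_pow, ← exp_nat_mul, one_mul, pow_zero, one_mul, mul_comm]; congr 2; push_cast; ring
    rw [h4, ← div_eq_mul_inv, le_div_iff₀ (by positivity)]
    linarith
  refine ne_top_of_le_ne_top ?_ h
  rw [← ofReal_integral_eq_lintegral_ofReal hi.integrableOn
    (Eventually.of_forall fun s => by simp only [Pi.zero_apply]; positivity)]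
  exact ENNReal.ofReal_ne_top

lemma AA0_fin (x : ℝ) (hx : x ∈ Icc (0:ℝ) 1) : AA 0 x ≠ ⊤ := by
  refine ne_top_of_le_ne_top AA0_one ?_
  rw [AA0_eq, AA0_eq]
  refine ENNReal.tsum_le_tsum fun n => ENNReal.ofReal_le_ofReal ?_
  unfold ee
  have := pp_nonneg n
  have := hx.1
  have := hx.2
  gcongr

lemma rhs_eq (x : ℝ) : ∫ t in Ioi (0:ℝ), (I0 (x*t))^2 * I0 t * (K0 t)^3 * t = 4 * mm 0 0 * (AA 0 x).toReal := by
  have h0 := MM0_nonneg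
  rw [integral_eq_lintegral_of_nonneg_ae]
  · have : ∫⁻ t in Ioi (0:ℝ), ENNReal.ofReal ((I0 (x*t))^2 * I0 t * (K0 t)^3 * t) = TT 0 x := by
      unfold TT
      congr 1; funext t; congr 1
      show _ = I0 (x*t)^2 * ((I0 t * K0 t^3) * t^(2*0+1))
      ring
    rw [this, TT0_eq, ENNReal.toReal_mul, ENNReal.toReal_ofReal (by positivity)]
  · refine (ae_restrict_iff' measurableSet_Ioi).2 (Eventually.of_forall fun t ht => ?_)
    have ht0 : 0 < t := ht
    have := I0_nonneg t
    have := K0_nonneg t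
    simp only [Pi.zero_apply]
    positivity
  · refine ContinuousOn.aestronglyMeasurable ?_ measurableSet_Ioi
    have : ContinuousOn K0 (Ioi 0) := fun t ht => (K0_hasDerivAt t ht).continuousAt.continuousWithinAt
    have := I0_continuous
    fun_prop

noncomputable abbrev mu : Measure ℝ := volume.restrict (Ioc 0 π)

lemma iter4 (f : ℝ × ℝ × ℝ × ℝ → ℝ) (hf : Integrable f (mu.prod (mu.prod (mu.prod mu)))) :
    ∫ p1, ∫ p2, ∫ p3, ∫ p4, f (p1, p2, p3, p4) ∂mu ∂mu ∂mu ∂mu = ∫ z, f z ∂(mu.prod (mu.prod (mu.prod mu))) := by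
  rw [integral_prod _ hf]
  refine integral_congr_ae ?_
  filter_upwards [hf.prod_right_ae] with p1 h1
  rw [integral_prod _ h1]
  refine integral_congr_ae ?_
  filter_upwards [h1.prod_right_ae] with p2 h2
  rw [integral_prod _ h2]

lemma mu_exp (s : ℝ) : ∫⁻ p, ENNReal.ofReal (exp (s * cos p)) ∂mu = ENNReal.ofReal (π * I0 s) := by
  have hi : IntegrableOn (fun p => exp (s * cos p)) (Ioc 0 π) :=
    (Continuous.integrableOn_Icc (by fun_prop)).mono_set Ioc_subset_Icc_self
  rw [← ofReal_integral_eq_lintegral_ofReal hi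
    (Eventually.of_forall fun s => by simp only [Pi.zero_apply]; positivity)]
  unfold I0
  rw [intervalIntegral.integral_of_le pi_pos.le]
  congr 1
  field_simp

lemma lhs_lint (x : ℝ) (hx : x ∈ Icc (0:ℝ) 1) :
    ∫⁻ z : ℝ × ℝ × ℝ × ℝ, ENNReal.ofReal (1 / (1 - (x/4) * (cos z.1 + cos z.2.1 + cos z.2.2.1 + cos z.2.2.2)))
      ∂(mu.prod (mu.prod (mu.prod mu))) = ENNReal.ofReal (4*π^4) * AA 0 x := by
  have h1 : ∫⁻ z : ℝ × ℝ × ℝ × ℝ, ENNReal.ofReal (1 / (1 - (x/4) * (cos z.1 + cos z.2.1 + cos z.2.2.1 + cos z.2.2.2)))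
      ∂(mu.prod (mu.prod (mu.prod mu))) = ∫⁻ z : ℝ × ℝ × ℝ × ℝ, (∫⁻ t in Ioi (0:ℝ),
        ENNReal.ofReal (4 * exp (-(4*t)) * (exp (x*t*cos z.1) * (exp (x*t*cos z.2.1) * (exp (x*t*cos z.2.2.1) * exp (x*t*cos z.2.2.2))))))
      ∂(mu.prod (mu.prod (mu.prod mu))) := by
    refine lintegral_congr_ae ?_
    have hm : ∀ᵐ z ∂(mu.prod (mu.prod (mu.prod mu))), z.1 ∈ Ioc (0:ℝ) π :=
      (Measure.quasiMeasurePreserving_fst).ae (p := fun p => p ∈ Ioc (0:ℝ) π) (ae_restrict_mem measurableSet_Ioc)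
    filter_upwards [hm] with z hz
    have c1 : cos z.1 < 1 := by
      have := Real.strictAntiOn_cos ⟨le_refl 0, pi_pos.le⟩ ⟨hz.1.le, hz.2⟩ hz.1
      rwa [cos_zero] at this
    have c2 := cos_le_one z.2.1
    have c3 := cos_le_one z.2.2.1
    have c4 := cos_le_one z.2.2.2
    set S := cos z.1 + cos z.2.1 + cos z.2.2.1 + cos z.2.2.2 with hS
    have hu : 0 < 1 - (x/4)*S := by
      have hS4 : S < 4 := by linarith
      rcases hx.1.eq_or_lt with h | h
      · rw [← h]; norm_num
      · nlinarith [hx.2]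
    have hneg : -(4*(1-(x/4)*S)) < 0 := by linarith
    have hint : IntegrableOn (fun t : ℝ => 4 * exp (-(4*(1-(x/4)*S)) * t)) (Ioi 0) :=
      (integrableOn_exp_mul_Ioi hneg 0).const_mul 4
    have hval : ∫ t in Ioi (0:ℝ), 4 * exp (-(4*(1-(x/4)*S)) * t) = 1 / (1 - (x/4)*S) := by
      rw [integral_const_mul, integral_exp_mul_Ioi hneg]
      rw [mul_zero, exp_zero]
      field_simp
    rw [← hval, ofReal_integral_eq_lintegral_ofReal hint
      (Eventually.of_forall fun s => by simp only [Pi.zero_apply]; positivity)]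
    congr 1; funext t; congr 1
    rw [mul_assoc, ← exp_add, ← exp_add, ← exp_add, ← exp_add]
    congr 2
    rw [hS]; ring
  rw [h1, lintegral_lintegral_swap]
  · unfold AA
    rw [← lintegral_const_mul' _ _ ENNReal.ofReal_ne_top]
    refine setLIntegral_congr_fun measurableSet_Ioi fun t ht => ?_
    have hI := I0_nonneg (x*t)
    have e : ∀ z : ℝ × ℝ × ℝ × ℝ, ENNReal.ofReal (4 * exp (-(4*t)) * (exp (x*t*cos z.1) * (exp (x*t*cos z.2.1) * (exp (x*t*cos z.2.2.1) * exp (x*t*cos z.2.2.2)))))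
      = ENNReal.ofReal (4 * exp (-(4*t))) * (ENNReal.ofReal (exp (x*t*cos z.1)) * (ENNReal.ofReal (exp (x*t*cos z.2.1)) * (ENNReal.ofReal (exp (x*t*cos z.2.2.1)) * ENNReal.ofReal (exp (x*t*cos z.2.2.2))))) := by
      intro z
      rw [ENNReal.ofReal_mul (by positivity), ENNReal.ofReal_mul (by positivity), ENNReal.ofReal_mul (by positivity), ENNReal.ofReal_mul (by positivity), ENNReal.ofReal_mul (by positivity)]
    simp only [e]
    have hm : Measurable (fun p => ENNReal.ofReal (exp (x*t*cos p))) := by fun_prop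
    rw [lintegral_const_mul' _ _ ENNReal.ofReal_ne_top]
    rw [lintegral_prod_mul (f := fun p => ENNReal.ofReal (exp (x*t*cos p)))
      (g := fun z : ℝ × ℝ × ℝ => ENNReal.ofReal (exp (x*t*cos z.1)) * (ENNReal.ofReal (exp (x*t*cos z.2.1)) * ENNReal.ofReal (exp (x*t*cos z.2.2))))
      hm.aemeasurable (by fun_prop),
      lintegral_prod_mul (f := fun p => ENNReal.ofReal (exp (x*t*cos p)))
      (g := fun z : ℝ × ℝ => ENNReal.ofReal (exp (x*t*cos z.1)) * ENNReal.ofReal (exp (x*t*cos z.2)))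
      hm.aemeasurable (by fun_prop),
      lintegral_prod_mul hm.aemeasurable hm.aemeasurable, mu_exp]
    rw [← ENNReal.ofReal_mul (by positivity), ← ENNReal.ofReal_mul (by positivity), ← ENNReal.ofReal_mul (by positivity),
      ← ENNReal.ofReal_mul (by positivity), ← ENNReal.ofReal_mul (by positivity)]
    congr 1; ring
  · refine Measurable.aemeasurable ?_
    fun_prop

theorem watson_integral_eq_bessel_moment :
    ∀ x ∈ Icc (0:ℝ) 1,
      (1 / (4 * π^4)) *
        (∫ p1 in (0:ℝ)..π, ∫ p2 in (0:ℝ)..π, ∫ p3 in (0:ℝ)..π, ∫ p4 in (0:ℝ)..π,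
          1 / (1 - (x/4) * (cos p1 + cos p2 + cos p3 + cos p4)))
      = (4 / π^2) * ∫ t in Ioi (0:ℝ), (I0 (x*t))^2 * I0 t * (K0 t)^3 * t := by
  intro x hx
  rw [rhs_eq, mm00]
  simp only [intervalIntegral.integral_of_le pi_pos.le]
  have hm : Measurable (fun z : ℝ × ℝ × ℝ × ℝ => 1 / (1 - (x/4) * (cos z.1 + cos z.2.1 + cos z.2.2.1 + cos z.2.2.2))) := by
    fun_prop
  have hnn : ∀ z : ℝ × ℝ × ℝ × ℝ, 0 ≤ 1 / (1 - (x/4) * (cos z.1 + cos z.2.1 + cos z.2.2.1 + cos z.2.2.2)) := by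
    intro z
    have c1 := cos_le_one z.1
    have c2 := cos_le_one z.2.1
    have c3 := cos_le_one z.2.2.1
    have c4 := cos_le_one z.2.2.2
    have : 0 ≤ 1 - (x/4) * (cos z.1 + cos z.2.1 + cos z.2.2.1 + cos z.2.2.2) := by
      nlinarith [hx.1, hx.2]
    positivity
  have hl := lhs_lint x hx
  have hf : Integrable (fun z : ℝ × ℝ × ℝ × ℝ => 1 / (1 - (x/4) * (cos z.1 + cos z.2.1 + cos z.2.2.1 + cos z.2.2.2)))
      (mu.prod (mu.prod (mu.prod mu))) := by
    refine ⟨hm.aestronglyMeasurable, ?_⟩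
    rw [hasFiniteIntegral_iff_ofReal (Eventually.of_forall hnn), hl]
    exact ENNReal.mul_lt_top ENNReal.ofReal_lt_top (AA0_fin x hx).lt_top
  have h4 := iter4 _ hf
  rw [integral_eq_lintegral_of_nonneg_ae (Eventually.of_forall hnn) hm.aestronglyMeasurable, hl,
    ENNReal.toReal_mul, ENNReal.toReal_ofReal (by positivity)] at h4
  simp only at h4
  rw [h4]
  have := pi_pos
  field_simp
  ring
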